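/- arXiv:2502.19196 — 3 statements merged into one kernel-verified Lean document; each statement's English description precedes it below -/
import Mathlib

section
/- Let ℓ ≥ 6 be an integer and let M be a matroid on a finite ground set such that every circuit of M and every circuit of the dual matroid M* has cardinality at least ℓ and at most (ℓ−2)⁴. Then T_M(2,0) · T_M(0,2) ≥ T_M(1,1)². -/
open scoped Classical

/-- The rank of a set in a matroid: the maximal cardinality of an independent subset. -/
noncomputable def mrank {α : Type*} (M : Matroid α) (S : Set α) : ℕ :=
  sSup {n : ℕ | ∃ I ⊆ S, M.Indep I ∧ I.ncard = n}

/-- The Tutte polynomial of a matroid whose ground set is the whole (finite) type `α`: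
`T_M(x,y) = Σ_{S ⊆ E} (x−1)^{r(E)−r(S)} (y−1)^{|S|−r(S)}`. -/
noncomputable def matroidTutte {α : Type*} [Fintype α] (M : Matroid α) (x y : ℝ) : ℝ :=
  ∑ S : Finset α,
    (x - 1) ^ (mrank M Set.univ - mrank M (S : Set α)) *
    (y - 1) ^ (S.card - mrank M (S : Set α))

/-- A circuit of a matroid: a minimal dependent set. -/
def IsMatroidCircuit {α : Type*} (M : Matroid α) (C : Set α) : Prop :=
  M.Dep C ∧ ∀ D ⊂ C, M.Indep D


/-!
For every total order of the ground set, Crapo's expansion writes `T_M(x, y)` as the sum over the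
bases `B` of `x ^ (internal activity) * y ^ (external activity)`. Average it at `(2, 0)` over the
orders given by independent uniform points of `{0, …, m - 1}`. An element is active for `B` when it
precedes all its neighbors in the exchange graph of `B`, so the summand of `B` dominates a product
of factors, one for each element, which become monotone in the random point once the coordinates in
`B` are reversed. Confine the coordinates outside `B` to the top fraction `p` of the grid and apply
Harris' inequality: as `m → ∞`, the average is at least the product over the elements of a factor
depending only on the degree in the exchange graph, and this degree is one less than the size of a
fundamental circuit of `M` or of `M✶`.

Doing the same for `M✶` and combining the two bounds by the Cauchy–Schwarz inequality, it is enough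
that the factors attached to the two sides of `B` have product at least `1` for every degree that
occurs. With `k = ℓ - 2` this holds for `p = (k ^ 2 + 1) / (k ^ 2 + 2)`.
-/

open Matroid
open scoped BigOperators symmDiff

lemma isMatroidCircuit_iff_isCircuit {α : Type*} {M : Matroid α} {C : Set α} :
    IsMatroidCircuit M C ↔ M.IsCircuit C :=
  isCircuit_iff_forall_ssubset.symm

section Rank

variable {α : Type*} {M : Matroid α}

lemma mrank_eq_ncard_of_isBasis' [M.RankFinite] {I S : Set α} (hI : M.IsBasis' I S) :
    mrank M S = I.ncard := by
  have ncard_le : ∀ J ⊆ S, M.Indep J → J.ncard ≤ I.ncard := fun J hJS hJ => by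
    rw [← Nat.cast_le (α := ℕ∞), hJ.finite.cast_ncard_eq, hI.indep.finite.cast_ncard_eq,
      ← hI.eRk_eq_encard]
    exact hJ.encard_le_eRk_of_subset hJS
  have isGreatest : IsGreatest {n : ℕ | ∃ J ⊆ S, M.Indep J ∧ J.ncard = n} I.ncard :=
    ⟨⟨I, hI.subset, hI.indep, rfl⟩, by rintro _ ⟨J, hJS, hJ, rfl⟩; exact ncard_le J hJS hJ⟩
  exact isGreatest.csSup_eq

lemma mrank_univ_eq_ncard_of_isBase [M.RankFinite] {B : Set α} (hB : M.IsBase B) :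
    mrank M Set.univ = B.ncard :=
  mrank_eq_ncard_of_isBasis' ⟨⟨hB.indep, Set.subset_univ B⟩,
    fun _ hJ hBJ => (hB.eq_of_subset_indep hJ.1 hBJ).ge⟩

end Rank

section Exchange

variable {α : Type*} {M : Matroid α}

lemma isBase_insert_sdiff_singleton_iff_mem_fundCircuit {B : Set α} (hB : M.IsBase B) {e f : α}
    (heE : e ∈ M.E) (he : e ∉ B) (hf : f ∈ B) :
    M.IsBase (insert e B \ {f}) ↔ f ∈ M.fundCircuit e B := by
  rw [hB.indep.mem_fundCircuit_iff (hB.closure_eq ▸ heE) he]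
  exact ⟨IsBase.indep, hB.exchange_isBase_of_indep' hf he⟩

lemma exists_isBase_insert_sdiff_singleton {B B' : Set α} (hB : M.IsBase B) (hB' : M.IsBase B')
    {e : α} (he : e ∈ B' \ B) : ∃ f ∈ B \ B', M.IsBase (insert e B \ {f}) := by
  have heE : e ∈ M.E := hB'.subset_ground he.1
  obtain ⟨f, hf, hfB'⟩ := Set.not_subset.mp fun h =>
    (hB.fundCircuit_isCircuit heE he.2).not_indep (hB'.indep.subset h)
  have hfB : f ∈ B := (fundCircuit_subset_insert M e B hf).resolve_left
    (ne_of_mem_of_not_mem he.1 hfB').symm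
  exact ⟨f, ⟨hfB, hfB'⟩,
    (isBase_insert_sdiff_singleton_iff_mem_fundCircuit hB heE he.2 hfB).mpr hf⟩

lemma symmDiff_pair_eq_insert_erase {B : Finset α} {e f : α} (he : e ∉ B) (hf : f ∈ B) :
    B ∆ {e, f} = insert e (B.erase f) := by
  ext x
  simp only [Finset.mem_symmDiff, Finset.mem_insert, Finset.mem_singleton, Finset.mem_erase]
  grind

variable [Fintype α]

/-- The elements `f` that can be exchanged with `e` in the base `B`: those for which toggling both
`e` and `f` in `B` yields a base. The exchanged pairs are the edges of the bipartite exchange graph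
of `B`, and `e` may lie on either side of `B`. -/
noncomputable def exchangeNeighbors (M : Matroid α) (B : Finset α) (e : α) : Finset α :=
  {f | M.IsBase (↑(B ∆ {e, f}) : Set α)}

variable {B : Finset α} {e f : α}

lemma mem_exchangeNeighbors :
    f ∈ exchangeNeighbors M B e ↔ M.IsBase (↑(B ∆ {e, f}) : Set α) := by
  simp [exchangeNeighbors]

lemma mem_exchangeNeighbors_comm :
    f ∈ exchangeNeighbors M B e ↔ e ∈ exchangeNeighbors M B f := by
  rw [mem_exchangeNeighbors, mem_exchangeNeighbors, Finset.pair_comm]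

lemma mem_exchangeNeighbors_iff_isBase (he : e ∉ B) (hf : f ∈ B) :
    f ∈ exchangeNeighbors M B e ↔ M.IsBase (insert e ↑B \ {f}) := by
  rw [mem_exchangeNeighbors, symmDiff_pair_eq_insert_erase he hf, Finset.coe_insert,
    Finset.coe_erase, Set.insert_sdiff_singleton_comm (ne_of_mem_of_not_mem hf he).symm]

lemma mem_iff_notMem_of_mem_exchangeNeighbors (hB : M.IsBase (B : Set α))
    (h : f ∈ exchangeNeighbors M B e) : f ∈ B ↔ e ∉ B := by
  have hB' := mem_exchangeNeighbors.mp h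
  have symmDiff_ne : B ∆ {e, f} ≠ B := by simp [Finset.insert_ne_empty]
  have not_subset : ¬ B ∆ {e, f} ⊆ B := fun hsub => symmDiff_ne
    (Finset.coe_injective (hB'.eq_of_subset_isBase hB (Finset.coe_subset.mpr hsub)))
  have not_superset : ¬ B ⊆ B ∆ {e, f} := fun hsub => symmDiff_ne
    (Finset.coe_injective (hB.eq_of_subset_isBase hB' (Finset.coe_subset.mpr hsub))).symm
  simp only [Finset.subset_iff, Finset.mem_symmDiff, Finset.mem_insert,
    Finset.mem_singleton] at not_subset not_superset
  grind

lemma mem_exchangeNeighbors_iff_mem_fundCircuit (hB : M.IsBase (B : Set α)) (heE : e ∈ M.E)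
    (he : e ∉ B) (hf : f ∈ B) :
    f ∈ exchangeNeighbors M B e ↔ f ∈ M.fundCircuit e B := by
  rw [mem_exchangeNeighbors_iff_isBase he hf,
    isBase_insert_sdiff_singleton_iff_mem_fundCircuit hB heE he hf]

lemma insert_exchangeNeighbors_eq_fundCircuit (hB : M.IsBase (B : Set α)) (heE : e ∈ M.E)
    (he : e ∉ B) : insert e (exchangeNeighbors M B e : Set α) = M.fundCircuit e B := by
  ext f
  by_cases hf : f ∈ B
  · rw [Set.mem_insert_iff, or_iff_right (ne_of_mem_of_not_mem hf he), Finset.mem_coe,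
      mem_exchangeNeighbors_iff_mem_fundCircuit hB heE he hf]
  · have notMem_exchangeNeighbors : f ∉ exchangeNeighbors M B e := fun h =>
      hf ((mem_iff_notMem_of_mem_exchangeNeighbors hB h).mpr he)
    constructor
    · rintro (rfl | h)
      · exact mem_fundCircuit M f B
      · exact absurd h notMem_exchangeNeighbors
    · exact fun h => Or.inl ((fundCircuit_subset_insert M e B h).resolve_right hf)

lemma exchangeNeighbors_dual_compl (hE : M.E = Set.univ) (B : Finset α) (e : α) :
    exchangeNeighbors M✶ Bᶜ e = exchangeNeighbors M B e := by
  ext f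
  have compl_symmDiff_pair : Bᶜ ∆ {e, f} = (B ∆ {e, f})ᶜ := by
    ext x
    simp only [Finset.mem_symmDiff, Finset.mem_compl]
    tauto
  rw [mem_exchangeNeighbors, mem_exchangeNeighbors, compl_symmDiff_pair, Finset.coe_compl,
    dual_isBase_iff (by simp [hE]), hE, ← Set.compl_eq_univ_sdiff, compl_compl]

end Exchange

section LocalOptimum

variable {α : Type*} [Fintype α] {M : Matroid α}

/-- The finset of bases, as index set of the sums below. -/
noncomputable def bases (M : Matroid α) : Finset (Finset α) :=
  {B | M.IsBase (B : Set α)}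

lemma mem_bases {B : Finset α} : B ∈ bases M ↔ M.IsBase (B : Set α) := by
  simp [bases]

/-- A base whose weight increases strictly along every exchange. -/
def IsLocallyOptimal (M : Matroid α) (w : α → ℤ) (B : Finset α) : Prop :=
  ∀ e ∈ B, ∀ f ∈ exchangeNeighbors M B e, w e < w f

lemma bases_nonempty (M : Matroid α) : (bases M).Nonempty := by
  obtain ⟨B, hB⟩ := M.exists_isBase
  exact ⟨B.toFinset, mem_bases.mpr (by simpa using hB)⟩

lemma exists_mem_bases_isLocallyOptimal {w : α → ℤ} (hw : Function.Injective w) :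
    ∃ B ∈ bases M, IsLocallyOptimal M w B := by
  obtain ⟨B, hB, minimal⟩ := (bases M).exists_min_image (fun B => ∑ e ∈ B, w e) (bases_nonempty M)
  refine ⟨B, hB, fun e he f hf => ?_⟩
  have hfB : f ∉ B := fun h =>
    (mem_iff_notMem_of_mem_exchangeNeighbors (mem_bases.mp hB) hf).mp h he
  have sum_le := minimal _ (mem_bases.mpr (mem_exchangeNeighbors.mp hf))
  rw [Finset.pair_comm, symmDiff_pair_eq_insert_erase hfB he, Finset.sum_insert (by simp [hfB]),
    ← Finset.add_sum_erase B w he] at sum_le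
  exact lt_of_le_of_ne (by simpa using sum_le) (hw.ne (ne_of_mem_of_not_mem he hfB))

lemma IsLocallyOptimal.eq {w : α → ℤ} {B B' : Finset α} (hB : M.IsBase (B : Set α))
    (hB' : M.IsBase (B' : Set α)) (h : IsLocallyOptimal M w B) (h' : IsLocallyOptimal M w B') :
    B = B' := by
  by_contra hne
  obtain ⟨e, he, minimal⟩ := (B ∆ B').exists_min_image w
    (Finset.nonempty_iff_ne_empty.mpr (by simpa using hne))
  wlog he' : e ∈ B' \ B generalizing B B'
  · exact this hB' hB h' h (Ne.symm hne) (symmDiff_comm B B' ▸ he) (symmDiff_comm B B' ▸ minimal)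
      (by rw [Finset.mem_symmDiff] at he; grind)
  have heB' : e ∈ (B' : Set α) \ B := by simpa using he'
  obtain ⟨f, hf, exchange⟩ := exists_isBase_insert_sdiff_singleton hB hB' heB'
  have he_mem : e ∈ exchangeNeighbors M B f := mem_exchangeNeighbors_comm.mp
    ((mem_exchangeNeighbors_iff_isBase heB'.2 hf.1).mpr exchange)
  exact (h f hf.1 e he_mem).not_ge (minimal f (by simp_all [Finset.mem_symmDiff]))

end LocalOptimum

section Activity

variable {α : Type*} {k : α → ℕ}

/-- The weight whose locally optimal base `B` is the one with `S ∆ B ⊆ active M k B`: elements of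
`S` come first, in decreasing order of `k`, followed by the others in increasing order. -/
noncomputable def signedWeight (k : α → ℕ) (S : Finset α) (e : α) : ℤ :=
  if e ∈ S then -(k e : ℤ) - 1 else k e

lemma signedWeight_injective (hk : Function.Injective k) (S : Finset α) :
    Function.Injective (signedWeight k S) := by
  intro e f h
  refine hk ?_
  simp only [signedWeight] at h
  split_ifs at h <;> omega

variable [Fintype α] {M : Matroid α} {B S : Finset α} {e : α}

/-- The active elements of a base `B` for the order of `α` given by `k`: internally active elements
if they lie in `B`, externally active elements otherwise. -/
noncomputable def active (M : Matroid α) (k : α → ℕ) (B : Finset α) : Finset α :=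
  {e | ∀ f ∈ exchangeNeighbors M B e, k e < k f}

lemma mem_active : e ∈ active M k B ↔ ∀ f ∈ exchangeNeighbors M B e, k e < k f := by
  simp [active]

lemma active_dual_compl (hE : M.E = Set.univ) (k : α → ℕ) (B : Finset α) :
    active M✶ k Bᶜ = active M k B := by
  ext e
  rw [mem_active, mem_active, exchangeNeighbors_dual_compl hE]

lemma isLocallyOptimal_signedWeight_iff (hB : M.IsBase (B : Set α)) :
    IsLocallyOptimal M (signedWeight k S) B ↔ S ∆ B ⊆ active M k B := by
  have mem_iff {e f : α} (h : f ∈ exchangeNeighbors M B e) : f ∈ B ↔ e ∉ B :=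
    mem_iff_notMem_of_mem_exchangeNeighbors hB h
  simp only [IsLocallyOptimal, signedWeight, Finset.subset_iff, Finset.mem_symmDiff, mem_active]
  constructor
  · intro optimal e he f hf
    have := @mem_iff e f hf
    rcases he with ⟨heS, heB⟩ | ⟨heB, heS⟩
    · have := optimal f (by tauto) e (mem_exchangeNeighbors_comm.mp hf)
      split_ifs at this <;> omega
    · have := optimal e heB f hf
      split_ifs at this <;> omega
  · intro h e he f hf
    have := @mem_iff e f hf
    have he_lt : e ∉ S → k e < k f := fun heS => h (Or.inr ⟨he, heS⟩) f hf
    have hf_lt : f ∈ S → k f < k e := fun hfS =>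
      h (Or.inl ⟨hfS, by tauto⟩) e (mem_exchangeNeighbors_comm.mp hf)
    split_ifs <;> grind

lemma existsUnique_base_symmDiff_subset_active (hk : Function.Injective k) (S : Finset α) :
    ∃! B, B ∈ bases M ∧ S ∆ B ⊆ active M k B := by
  obtain ⟨B, hB, optimal⟩ :=
    exists_mem_bases_isLocallyOptimal (M := M) (signedWeight_injective hk S)
  refine ⟨B, ⟨hB, (isLocallyOptimal_signedWeight_iff (mem_bases.mp hB)).mp optimal⟩, ?_⟩
  rintro B' ⟨hB', h'⟩
  exact IsLocallyOptimal.eq (mem_bases.mp hB') (mem_bases.mp hB)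
    ((isLocallyOptimal_signedWeight_iff (mem_bases.mp hB')).mpr h') optimal

lemma sum_eq_sum_bases_sum_powerset_active {R : Type*} [AddCommMonoid R]
    (hk : Function.Injective k) (F : Finset α → R) :
    ∑ S, F S = ∑ B ∈ bases M, ∑ D ∈ (active M k B).powerset, F (D ∆ B) := by
  have sum_interval (B : Finset α) : ∑ D ∈ (active M k B).powerset, F (D ∆ B) =
      ∑ S, if S ∆ B ⊆ active M k B then F S else 0 := by
    rw [← Finset.sum_filter]
    exact Finset.sum_nbij' (· ∆ B) (· ∆ B) (by simp) (by simp) (by simp) (by simp) (by simp)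
  have sum_indicator (S : Finset α) :
      ∑ B ∈ bases M, (if S ∆ B ⊆ active M k B then F S else 0) = F S := by
    obtain ⟨B, ⟨hB, hSB⟩, unique⟩ := existsUnique_base_symmDiff_subset_active (M := M) hk S
    rw [Finset.sum_eq_single_of_mem B hB fun B' hB' hne =>
      if_neg fun h => hne (unique B' ⟨hB', h⟩), if_pos hSB]
  simp only [sum_interval]
  rw [Finset.sum_comm]
  exact (Finset.sum_congr rfl fun S _ => sum_indicator S).symm

end Activity

section Crapo

variable {α : Type*} [Fintype α] {M : Matroid α} {k : α → ℕ} {B D : Finset α}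

lemma isBasis'_sdiff_of_subset_active (hB : M.IsBase (B : Set α)) (hD : D ⊆ active M k B) :
    M.IsBasis' (B \ D : Finset α) (D ∆ B : Finset α) := by
  refine ⟨⟨hB.indep.subset (Finset.coe_subset.mpr Finset.sdiff_subset),
    Finset.coe_subset.mpr le_sup_right⟩, ?_⟩
  rintro J ⟨hJ, hJS⟩ hBJ e heJ
  by_contra he
  obtain ⟨heD, heB⟩ : e ∈ D ∧ e ∉ B :=
    (Finset.mem_symmDiff.mp (hJS heJ)).resolve_right (mt Finset.mem_sdiff.mpr he)
  obtain ⟨B', hB', hJB'⟩ := hJ.exists_isBase_superset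
  obtain ⟨f, ⟨hfB, hfB'⟩, exchange⟩ := exists_isBase_insert_sdiff_singleton hB hB' ⟨hJB' heJ, heB⟩
  have hfD : f ∈ D := by
    by_contra hfD
    exact hfB' (hJB' (hBJ (Finset.mem_coe.mpr (Finset.mem_sdiff.mpr ⟨hfB, hfD⟩))))
  have hf_mem := (mem_exchangeNeighbors_iff_isBase heB hfB).mpr exchange
  exact lt_asymm (mem_active.mp (hD heD) f hf_mem)
    (mem_active.mp (hD hfD) e (mem_exchangeNeighbors_comm.mp hf_mem))

lemma tutte_term_eq_prod (hB : M.IsBase (B : Set α)) (hD : D ⊆ active M k B) (x y : ℝ) :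
    (x - 1) ^ (mrank M Set.univ - mrank M (D ∆ B : Finset α)) *
      (y - 1) ^ ((D ∆ B).card - mrank M (D ∆ B : Finset α)) =
    ∏ e ∈ D, ((if e ∈ B then x else y) - 1) := by
  have rank_eq : mrank M (D ∆ B : Finset α) = (B \ D).card := by
    rw [mrank_eq_ncard_of_isBasis' (isBasis'_sdiff_of_subset_active hB hD), Set.ncard_coe_finset]
  have corank_eq : mrank M Set.univ - (B \ D).card = (D.filter (· ∈ B)).card := by
    rw [mrank_univ_eq_ncard_of_isBase hB, Set.ncard_coe_finset, Finset.filter_mem_eq_inter,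
      Finset.inter_comm, ← Finset.card_sdiff_add_card_inter B D, Nat.add_sub_cancel_left]
  have nullity_eq : (D ∆ B).card - (B \ D).card = (D.filter (· ∉ B)).card := by
    rw [Finset.filter_notMem_eq_sdiff, symmDiff_def, Finset.sup_eq_union,
      Finset.card_union_of_disjoint disjoint_sdiff_sdiff, Nat.add_sub_cancel_right]
  simp only [rank_eq, corank_eq, nullity_eq, apply_ite (· - (1 : ℝ)), Finset.prod_ite,
    Finset.prod_const]

theorem matroidTutte_eq_sum_bases_prod_active (M : Matroid α) (hk : Function.Injective k)
    (x y : ℝ) :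
    matroidTutte M x y = ∑ B ∈ bases M, ∏ e ∈ active M k B, if e ∈ B then x else y := by
  rw [matroidTutte, sum_eq_sum_bases_sum_powerset_active (M := M) hk]
  refine Finset.sum_congr rfl fun B hB => ?_
  rw [Finset.sum_congr rfl fun D hD => tutte_term_eq_prod (mem_bases.mp hB)
    (Finset.mem_powerset.mp hD) x y, ← Finset.prod_add_one]
  simp only [sub_add_cancel]

lemma matroidTutte_one_one (M : Matroid α) : matroidTutte M 1 1 = (bases M).card := by
  obtain ⟨k, hk⟩ := Countable.exists_injective_nat α
  simp [matroidTutte_eq_sum_bases_prod_active M hk]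

lemma sum_bases_dual {R : Type*} [AddCommMonoid R] (hE : M.E = Set.univ) (F : Finset α → R) :
    ∑ B ∈ bases M✶, F B = ∑ B ∈ bases M, F Bᶜ := by
  have mem_iff (B : Finset α) : B ∈ bases M✶ ↔ Bᶜ ∈ bases M := by
    rw [mem_bases, mem_bases, dual_isBase_iff (by simp [hE]), hE, Finset.coe_compl,
      Set.compl_eq_univ_sdiff]
  exact Finset.sum_nbij' (·ᶜ) (·ᶜ) (by simp [mem_iff]) (by simp [mem_iff]) (by simp) (by simp)
    (by simp)

theorem matroidTutte_dual (hE : M.E = Set.univ) (x y : ℝ) :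
    matroidTutte M✶ x y = matroidTutte M y x := by
  obtain ⟨k, hk⟩ := Countable.exists_injective_nat α
  rw [matroidTutte_eq_sum_bases_prod_active M✶ hk, matroidTutte_eq_sum_bases_prod_active M hk,
    sum_bases_dual hE]
  simp only [active_dual_compl hE, Finset.mem_compl, ite_not]

end Crapo

section Correlation

lemma expect_mul_expect_le_expect_mul {L : Type*} [DistribLattice L] {P : Finset L}
    (hinf : InfClosed (P : Set L)) (hsup : SupClosed (P : Set L)) {f g : L → ℝ}
    (hf₀ : 0 ≤ f) (hg₀ : 0 ≤ g) (hf : Monotone f) (hg : Monotone g) :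
    (𝔼 x ∈ P, f x) * 𝔼 x ∈ P, g x ≤ 𝔼 x ∈ P, f x * g x := by
  have correlation : (∑ x ∈ P, f x) * ∑ x ∈ P, g x ≤ (P.card : ℝ) * ∑ x ∈ P, f x * g x := by
    have four_functions := four_functions_theorem (f₁ := f) (f₂ := g) (f₃ := 1) (f₄ := f * g)
      hf₀ hg₀ zero_le_one (mul_nonneg hf₀ hg₀)
      (fun a b => by
        simpa using mul_le_mul (hf le_sup_left) (hg le_sup_right) (hg₀ b) (hf₀ (a ⊔ b))) P P
    simpa [Finset.infs_self.mpr hinf, Finset.sups_eq_self.mpr hsup] using four_functions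
  rcases P.eq_empty_or_nonempty with rfl | hP
  · simp
  have card_pos : (0 : ℝ) < P.card := by exact_mod_cast hP.card_pos
  simp only [Finset.expect_eq_sum_div_card]
  rw [div_mul_div_comm, div_le_div_iff₀ (by positivity) card_pos]
  nlinarith

lemma prod_expect_le_expect_prod {ι L : Type*} [DistribLattice L] {P : Finset L} (hP : P.Nonempty)
    (hinf : InfClosed (P : Set L)) (hsup : SupClosed (P : Set L)) (s : Finset ι) {f : ι → L → ℝ}
    (hf₀ : ∀ i, 0 ≤ f i) (hf : ∀ i, Monotone (f i)) :
    ∏ i ∈ s, 𝔼 x ∈ P, f i x ≤ 𝔼 x ∈ P, ∏ i ∈ s, f i x := by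
  induction s using Finset.induction with
  | empty => simp [Finset.expect_const hP]
  | insert i s hi ih =>
    simp only [Finset.prod_insert hi]
    have prod_nonneg : 0 ≤ fun x => ∏ j ∈ s, f j x := fun x =>
      Finset.prod_nonneg fun j _ => hf₀ j x
    have prod_monotone : Monotone fun x => ∏ j ∈ s, f j x := fun x y hxy =>
      Finset.prod_le_prod (fun j _ => hf₀ j x) fun j _ => hf j hxy
    exact (mul_le_mul_of_nonneg_left ih (Finset.expect_nonneg fun x _ => hf₀ i x)).trans
      (expect_mul_expect_le_expect_mul hinf hsup (hf₀ i) prod_nonneg (hf i) prod_monotone)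

end Correlation

section Box

variable {α ι : Type*} [Fintype α] {R : α → Finset ι}

lemma prod_expect_le_expect_piFinset_prod [LinearOrder ι] (hR : ∀ e, (R e).Nonempty)
    {f : α → (α → ι) → ℝ} (hf₀ : ∀ e, 0 ≤ f e) (hf : ∀ e, Monotone (f e)) :
    ∏ e, 𝔼 g ∈ Fintype.piFinset R, f e g ≤ 𝔼 g ∈ Fintype.piFinset R, ∏ e, f e g := by
  refine prod_expect_le_expect_prod (Fintype.piFinset_nonempty.mpr hR) ?_ ?_ Finset.univ hf₀ hf
  · rw [Fintype.coe_piFinset]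
    exact infClosed_pi fun e _ => LinearOrder.infClosed _
  · rw [Fintype.coe_piFinset]
    exact supClosed_pi fun e _ => LinearOrder.supClosed _

lemma expect_piFinset_prod (R : α → Finset ι) (φ : α → ι → ℝ) :
    𝔼 g ∈ Fintype.piFinset R, ∏ e, φ e (g e) = ∏ e, 𝔼 i ∈ R e, φ e i := by
  simp only [Finset.expect_eq_sum_div_card, Finset.prod_div_distrib, Finset.prod_univ_sum,
    Fintype.card_piFinset, Nat.cast_prod]

lemma expect_piFinset_prod_of_subset (hR : ∀ e, (R e).Nonempty) (s : Finset α)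
    (φ : α → ι → ℝ) :
    𝔼 g ∈ Fintype.piFinset R, ∏ e ∈ s, φ e (g e) = ∏ e ∈ s, 𝔼 i ∈ R e, φ e i := by
  have expect_ite (e : α) : (𝔼 i ∈ R e, if e ∈ s then φ e i else 1) =
      if e ∈ s then 𝔼 i ∈ R e, φ e i else 1 := by
    split_ifs
    exacts [rfl, Finset.expect_const (hR e) 1]
  simpa only [Fintype.prod_ite_mem, expect_ite] using
    expect_piFinset_prod R fun e i => if e ∈ s then φ e i else 1

lemma expect_piFinset_expect_update (hR : ∀ e, (R e).Nonempty) (e : α) (F : (α → ι) → ℝ) :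
    𝔼 j ∈ R e, 𝔼 g ∈ Fintype.piFinset R, F (Function.update g e j) =
      𝔼 g ∈ Fintype.piFinset R, F g := by
  have update_mem (j : ι) (g : α → ι) (hj : j ∈ R e) (hg : g ∈ Fintype.piFinset R) :
      Function.update g e j ∈ Fintype.piFinset R := by
    rw [Fintype.mem_piFinset] at hg ⊢
    intro x
    by_cases hx : x = e
    · subst hx; simpa using hj
    · simpa [hx] using hg x
  calc 𝔼 j ∈ R e, 𝔼 g ∈ Fintype.piFinset R, F (Function.update g e j)
      = 𝔼 _j ∈ R e, 𝔼 g ∈ Fintype.piFinset R, F g := by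
        rw [← Finset.expect_product', ← Finset.expect_product']
        refine Finset.expect_nbij' (fun x => (x.2 e, Function.update x.2 e x.1))
          (fun x => (x.2 e, Function.update x.2 e x.1)) ?_ ?_ (by simp) (by simp) (by simp)
        all_goals
          rintro ⟨j, g⟩ h
          rw [Finset.mem_product] at h ⊢
          exact ⟨Fintype.mem_piFinset.mp h.2 e, update_mem j g h.1 h.2⟩
    _ = 𝔼 g ∈ Fintype.piFinset R, F g := Finset.expect_const (hR e) _

lemma expect_piFinset_prod_apply_apply (hR : ∀ e, (R e).Nonempty) {e : α} {s : Finset α}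
    (he : e ∉ s) (h : ι → ι → ℝ) :
    𝔼 g ∈ Fintype.piFinset R, ∏ f ∈ s, h (g e) (g f) =
      𝔼 j ∈ R e, ∏ f ∈ s, 𝔼 i ∈ R f, h j i := by
  rw [← expect_piFinset_expect_update hR e]
  refine Finset.expect_congr rfl fun j _ => ?_
  rw [← expect_piFinset_prod_of_subset hR]
  refine Finset.expect_congr rfl fun g _ => Finset.prod_congr rfl fun f hf => ?_
  rw [Function.update_self, Function.update_of_ne (ne_of_mem_of_not_mem hf he)]

end Box

section Grid

variable {α : Type*} {A : Finset α} {nbr : α → Finset α} {m n : ℕ} {e : α}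

/-- The indicator of `m ≤ i + j`, that is, of `m - 1 - i < j` when `i < m`. -/
def threshold (m i j : ℕ) : ℝ :=
  if m ≤ i + j then 1 else 0

lemma threshold_nonneg (m i j : ℕ) : 0 ≤ threshold m i j := by
  unfold threshold; split_ifs <;> norm_num

lemma threshold_le_one (m i j : ℕ) : threshold m i j ≤ 1 := by
  unfold threshold; split_ifs <;> norm_num

lemma threshold_comm (m i j : ℕ) : threshold m i j = threshold m j i := by
  rw [threshold, threshold, Nat.add_comm]

lemma threshold_mono {m i i' j j' : ℕ} (hi : i ≤ i') (hj : j ≤ j') :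
    threshold m i j ≤ threshold m i' j' := by
  unfold threshold; split_ifs <;> first | omega | norm_num

lemma expect_Ico_threshold (hn : 0 < n) (hnm : n ≤ m) {j : ℕ} (hj : j < m) :
    𝔼 i ∈ Finset.Ico (m - n) m, threshold m j i = (min j n / n : ℝ) := by
  have filter_eq : {i ∈ Finset.Ico (m - n) m | m ≤ j + i} = Finset.Ico (m - min j n) m := by
    ext i
    simp only [Finset.mem_filter, Finset.mem_Ico]
    omega
  have card_eq : m - (m - n) = n := by omega
  have card_eq' : m - (m - min j n) = min j n := by omega
  simp [Finset.expect_eq_sum_div_card, threshold, filter_eq, Finset.sum_boole, card_eq, card_eq']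

lemma expect_range_one_sub_threshold {j : ℕ} (hj : j ≤ m) :
    𝔼 i ∈ Finset.range m, (1 - threshold m j i) = ((m - j : ℕ) / m : ℝ) := by
  have filter_eq : {i ∈ Finset.range m | ¬ m ≤ j + i} = Finset.range (m - j) := by
    ext i
    simp only [Finset.mem_filter, Finset.mem_range]
    omega
  have one_sub_eq (i : ℕ) : 1 - threshold m j i = if ¬ m ≤ j + i then 1 else 0 := by
    unfold threshold; split_ifs <;> simp
  simp only [Finset.expect_eq_sum_div_card, one_sub_eq, Finset.sum_boole, filter_eq,
    Finset.card_range]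

lemma expect_range_min_div_pow (hn : 0 < n) (hnm : n ≤ m) (d : ℕ) :
    𝔼 j ∈ Finset.range m, (min j n / n : ℝ) ^ d =
      1 - n / m + n / m * 𝔼 l ∈ Finset.range n, (l / n : ℝ) ^ d := by
  have hn' : (n : ℝ) ≠ 0 := by exact_mod_cast hn.ne'
  have hm' : (m : ℝ) ≠ 0 := by exact_mod_cast (hn.trans_le hnm).ne'
  have sum_low : ∑ j ∈ Finset.range n, (min j n / n : ℝ) ^ d =
      ∑ l ∈ Finset.range n, (l / n : ℝ) ^ d :=
    Finset.sum_congr rfl fun j hj => by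
      rw [min_eq_left (by exact_mod_cast (Finset.mem_range.mp hj).le)]
  have sum_high : ∑ j ∈ Finset.Ico n m, (min j n / n : ℝ) ^ d = m - n := by
    rw [Finset.sum_congr rfl fun j hj => show (min j n / n : ℝ) ^ d = 1 by
      rw [min_eq_right (by exact_mod_cast (Finset.mem_Ico.mp hj).1), div_self hn', one_pow]]
    simp [Nat.cast_sub hnm]
  rw [Finset.expect_eq_sum_div_card, Finset.expect_eq_sum_div_card, Finset.card_range,
    Finset.card_range, ← Finset.sum_range_add_sum_Ico _ hnm, sum_low, sum_high]
  field_simp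
  ring

lemma expect_Ico_sub_div_pow (hn : 0 < n) (hnm : n ≤ m) (d : ℕ) :
    𝔼 j ∈ Finset.Ico (m - n) m, ((m - j : ℕ) / m : ℝ) ^ d =
      (n / m : ℝ) ^ d * 𝔼 l ∈ Finset.range n, ((l + 1) / n : ℝ) ^ d := by
  have hn' : (n : ℝ) ≠ 0 := by exact_mod_cast hn.ne'
  rw [Finset.mul_expect]
  refine Finset.expect_nbij' (fun j => m - 1 - j) (fun l => m - 1 - l) ?_ ?_ ?_ ?_ ?_
  iterate 4
    intro j hj
    simp only [Finset.mem_Ico, Finset.mem_range] at hj ⊢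
    omega
  intro j hj
  rw [Finset.mem_Ico] at hj
  rw [← mul_pow, show m - j = m - 1 - j + 1 by omega]
  push_cast
  field_simp

/-- Call the edge joining `e` to `f ∈ nbr e` on if `threshold m (g e) (g f) = 1`, and off otherwise.
The factor of `e` is `2` if `e ∈ A` and all its edges are on, `0` if `e ∉ A` and all its edges are
off, and `1` in all other cases. -/
noncomputable def vertexFactor (A : Finset α) (nbr : α → Finset α) (m : ℕ) (e : α) (g : α → ℕ) :
    ℝ :=
  if e ∈ A then 1 + ∏ f ∈ nbr e, threshold m (g e) (g f)
  else 1 - ∏ f ∈ nbr e, (1 - threshold m (g e) (g f))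

lemma vertexFactor_of_mem (he : e ∈ A) (g : α → ℕ) :
    vertexFactor A nbr m e g = 1 + ∏ f ∈ nbr e, threshold m (g e) (g f) :=
  if_pos he

lemma vertexFactor_of_notMem (he : e ∉ A) (g : α → ℕ) :
    vertexFactor A nbr m e g = 1 - ∏ f ∈ nbr e, (1 - threshold m (g e) (g f)) :=
  if_neg he

lemma vertexFactor_nonneg : 0 ≤ vertexFactor A nbr m e := by
  intro g
  by_cases he : e ∈ A
  · rw [vertexFactor_of_mem he]
    exact add_nonneg zero_le_one (Finset.prod_nonneg fun f _ => threshold_nonneg _ _ _)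
  · rw [vertexFactor_of_notMem he]
    exact sub_nonneg.mpr (Finset.prod_le_one
      (fun f _ => sub_nonneg.mpr (threshold_le_one _ _ _))
      fun f _ => sub_le_self 1 (threshold_nonneg _ _ _))

lemma vertexFactor_monotone : Monotone (vertexFactor A nbr m e) := by
  intro g g' hg
  have threshold_le (f : α) : threshold m (g e) (g f) ≤ threshold m (g' e) (g' f) :=
    threshold_mono (hg e) (hg f)
  by_cases he : e ∈ A
  · rw [vertexFactor_of_mem he, vertexFactor_of_mem he]
    gcongr with f _
    · exact fun f _ => threshold_nonneg _ _ _
    · exact threshold_le f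
  · rw [vertexFactor_of_notMem he, vertexFactor_of_notMem he]
    gcongr with f _
    · exact fun f _ => sub_nonneg.mpr (threshold_le_one _ _ _)
    · exact threshold_le f

/-- The box of the grid `{0, …, m - 1} ^ α` whose coordinates outside `A` are restricted to the last
`n` values. -/
noncomputable def box (A : Finset α) (m n : ℕ) (e : α) : Finset ℕ :=
  if e ∈ A then Finset.range m else Finset.Ico (m - n) m

lemma box_of_mem (he : e ∈ A) : box A m n e = Finset.range m :=
  if_pos he

lemma box_of_notMem (he : e ∉ A) : box A m n e = Finset.Ico (m - n) m :=
  if_neg he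

lemma box_nonempty (hn : 0 < n) (hnm : n ≤ m) (e : α) : (box A m n e).Nonempty := by
  by_cases he : e ∈ A
  · rw [box_of_mem he, Finset.nonempty_range_iff]
    omega
  · rw [box_of_notMem he, Finset.nonempty_Ico]
    omega

variable [Fintype α]

lemma expect_box_vertexFactor_of_mem (hn : 0 < n) (hnm : n ≤ m) (he : e ∈ A)
    (hnbr : ∀ f ∈ nbr e, f ∉ A) :
    𝔼 g ∈ Fintype.piFinset (box A m n), vertexFactor A nbr m e g =
      2 - n / m + n / m * 𝔼 l ∈ Finset.range n, (l / n : ℝ) ^ (nbr e).card := by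
  have hR := box_nonempty (A := A) hn hnm
  have conditional (j : ℕ) (hj : j ∈ Finset.range m) :
      ∏ f ∈ nbr e, 𝔼 i ∈ box A m n f, threshold m j i = (min j n / n : ℝ) ^ (nbr e).card := by
    rw [← Finset.prod_const]
    refine Finset.prod_congr rfl fun f hf => ?_
    rw [box_of_notMem (hnbr f hf), expect_Ico_threshold hn hnm (Finset.mem_range.mp hj)]
  simp only [vertexFactor_of_mem he]
  rw [Finset.expect_add_distrib, Finset.expect_const (Fintype.piFinset_nonempty.mpr hR),
    expect_piFinset_prod_apply_apply hR (fun h => hnbr e h he), box_of_mem he,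
    Finset.expect_congr rfl conditional, expect_range_min_div_pow hn hnm]
  ring

lemma expect_box_vertexFactor_of_notMem (hn : 0 < n) (hnm : n ≤ m) (he : e ∉ A)
    (hnbr : ∀ f ∈ nbr e, f ∈ A) :
    𝔼 g ∈ Fintype.piFinset (box A m n), vertexFactor A nbr m e g =
      1 - (n / m : ℝ) ^ (nbr e).card *
        𝔼 l ∈ Finset.range n, ((l + 1) / n : ℝ) ^ (nbr e).card := by
  have hR := box_nonempty (A := A) hn hnm
  have conditional (j : ℕ) (hj : j ∈ Finset.Ico (m - n) m) :
      ∏ f ∈ nbr e, 𝔼 i ∈ box A m n f, (1 - threshold m j i) =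
        ((m - j : ℕ) / m : ℝ) ^ (nbr e).card := by
    rw [← Finset.prod_const]
    refine Finset.prod_congr rfl fun f hf => ?_
    rw [box_of_mem (hnbr f hf), expect_range_one_sub_threshold (Finset.mem_Ico.mp hj).2.le]
  simp only [vertexFactor_of_notMem he]
  rw [Finset.expect_sub_distrib, Finset.expect_const (Fintype.piFinset_nonempty.mpr hR),
    expect_piFinset_prod_apply_apply hR (fun h => he (hnbr e h)) fun i j => 1 - threshold m i j,
    box_of_notMem he, Finset.expect_congr rfl conditional, expect_Ico_sub_div_pow hn hnm]

lemma prod_mul_expect_box_le_expect_grid (hm : 0 < m) (hnm : n ≤ m) {F : (α → ℕ) → ℝ}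
    (hF : 0 ≤ F) :
    (∏ e, if e ∈ A then 1 else (n / m : ℝ)) * 𝔼 g ∈ Fintype.piFinset (box A m n), F g ≤
      𝔼 g ∈ Fintype.piFinset fun _ => Finset.range m, F g := by
  have hm' : (m : ℝ) ≠ 0 := by exact_mod_cast hm.ne'
  have box_subset (e : α) : box A m n e ⊆ Finset.range m := by
    unfold box
    split_ifs
    exacts [subset_rfl, fun i hi => Finset.mem_range.mpr (Finset.mem_Ico.mp hi).2]
  have card_div (e : α) : (if e ∈ A then 1 else (n / m : ℝ)) = (box A m n e).card / m := by
    unfold box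
    split_ifs
    · simp [hm']
    · simp [Nat.sub_sub_self hnm]
  have prod_eq : (∏ e, if e ∈ A then 1 else (n / m : ℝ)) =
      (Fintype.piFinset (box A m n)).card /
        (Fintype.piFinset fun _ : α => Finset.range m).card := by
    simp only [card_div, Finset.prod_div_distrib, Fintype.card_piFinset, Nat.cast_prod,
      Finset.card_range]
  rw [prod_eq, div_mul_eq_mul_div, Finset.card_mul_expect, Finset.expect_eq_sum_div_card]
  gcongr
  · exact fun g _ _ => hF g
  · exact Fintype.piFinset_subset _ _ box_subset

theorem prod_le_expect_grid_prod_vertexFactor (hn : 0 < n) (hnm : n ≤ m)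
    (hnbr : ∀ e, ∀ f ∈ nbr e, f ∈ A ↔ e ∉ A) :
    (∏ e, if e ∈ A then 2 - n / m + n / m * 𝔼 l ∈ Finset.range n, (l / n : ℝ) ^ (nbr e).card
      else (n / m : ℝ) * (1 - (n / m : ℝ) ^ (nbr e).card *
        𝔼 l ∈ Finset.range n, ((l + 1) / n : ℝ) ^ (nbr e).card)) ≤
      𝔼 g ∈ Fintype.piFinset fun _ => Finset.range m, ∏ e, vertexFactor A nbr m e g := by
  let weight (e : α) : ℝ := if e ∈ A then 1 else n / m
  calc
    _ = ∏ e, weight e * 𝔼 g ∈ Fintype.piFinset (box A m n), vertexFactor A nbr m e g := by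
      refine Finset.prod_congr rfl fun e _ => ?_
      by_cases he : e ∈ A
      · rw [if_pos he, expect_box_vertexFactor_of_mem hn hnm he
          fun f hf h => (hnbr e f hf).mp h he, show weight e = 1 from if_pos he, one_mul]
      · rw [if_neg he, expect_box_vertexFactor_of_notMem hn hnm he
          fun f hf => (hnbr e f hf).mpr he, show weight e = n / m from if_neg he]
    _ = (∏ e, weight e) *
        ∏ e, 𝔼 g ∈ Fintype.piFinset (box A m n), vertexFactor A nbr m e g :=
      Finset.prod_mul_distrib
    _ ≤ (∏ e, weight e) *
        𝔼 g ∈ Fintype.piFinset (box A m n), ∏ e, vertexFactor A nbr m e g := by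
      refine mul_le_mul_of_nonneg_left (prod_expect_le_expect_piFinset_prod
        (box_nonempty hn hnm) (fun _ => vertexFactor_nonneg) fun _ => vertexFactor_monotone)
        (Finset.prod_nonneg fun e _ => ?_)
      dsimp only [weight]
      split_ifs <;> positivity
    _ ≤ _ := prod_mul_expect_box_le_expect_grid (hn.trans_le hnm) hnm
      fun g => Finset.prod_nonneg fun e _ => vertexFactor_nonneg g

end Grid

section Reorientation

variable {α : Type*} [Fintype α] {M : Matroid α} {B : Finset α} {m : ℕ}

/-- The grid point `x` as an injective order on `α`, with ties broken by an enumeration of `α`. -/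
noncomputable def tieBreak (x : α → ℕ) (e : α) : ℕ :=
  x e * Fintype.card α + Fintype.equivFin α e

lemma tieBreak_lt_tieBreak {x : α → ℕ} {e f : α} (h : x e < x f) :
    tieBreak x e < tieBreak x f := by
  have he := (Fintype.equivFin α e).isLt
  have := Nat.mul_le_mul_right (Fintype.card α) (Nat.succ_le_of_lt h)
  rw [Nat.succ_mul] at this
  unfold tieBreak
  omega

lemma tieBreak_injective (x : α → ℕ) : Function.Injective (tieBreak x) := by
  intro e f h
  rcases lt_trichotomy (x e) (x f) with hx | hx | hx
  · exact absurd h (tieBreak_lt_tieBreak hx).ne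
  · refine (Fintype.equivFin α).injective (Fin.ext ?_)
    simpa [tieBreak, hx] using h
  · exact absurd h (tieBreak_lt_tieBreak hx).ne'

/-- The reflection of the coordinates in `B`, under which `threshold` becomes the comparison of a
coordinate in `B` with one outside. -/
noncomputable def reflect (m : ℕ) (B : Finset α) (g : α → ℕ) (e : α) : ℕ :=
  if e ∈ B then m - 1 - g e else g e

lemma vertexFactor_le_ite_active (hB : M.IsBase (B : Set α)) {g : α → ℕ} (hg : ∀ e, g e < m)
    (e : α) :
    vertexFactor B (exchangeNeighbors M B) m e g ≤
      if e ∈ active M (tieBreak (reflect m B g)) B then (if e ∈ B then 2 else 0) else 1 := by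
  have threshold_eq {e f : α} (he : e ∈ B) (hf : f ∉ B) :
      threshold m (g e) (g f) = if reflect m B g e < reflect m B g f then 1 else 0 := by
    have := hg e
    simp only [threshold, reflect, if_pos he, if_neg hf]
    congr 1
    exact propext (by omega)
  have mem_iff {f : α} (hf : f ∈ exchangeNeighbors M B e) : f ∈ B ↔ e ∉ B :=
    mem_iff_notMem_of_mem_exchangeNeighbors hB hf
  by_cases he : e ∈ B
  · rw [vertexFactor_of_mem he, if_pos he]
    have prod_le_one : ∏ f ∈ exchangeNeighbors M B e, threshold m (g e) (g f) ≤ 1 :=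
      Finset.prod_le_one (fun f _ => threshold_nonneg _ _ _) fun f _ => threshold_le_one _ _ _
    split_ifs with h
    · linarith
    · obtain ⟨f, hf, hfe⟩ : ∃ f ∈ exchangeNeighbors M B e, reflect m B g f ≤ reflect m B g e := by
        by_contra! lt
        exact h (mem_active.mpr fun f hf => tieBreak_lt_tieBreak (lt f hf))
      have hfB : f ∉ B := fun hfB => (mem_iff hf).mp hfB he
      rw [Finset.prod_eq_zero hf (by rw [threshold_eq he hfB, if_neg hfe.not_gt]), add_zero]
  · rw [vertexFactor_of_notMem he, if_neg he]
    split_ifs with h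
    · have edge_off (f : α) (hf : f ∈ exchangeNeighbors M B e) :
          1 - threshold m (g e) (g f) = 1 := by
        have hef := mem_active.mp h f hf
        rw [threshold_comm, threshold_eq ((mem_iff hf).mpr he) he,
          if_neg fun lt => lt_asymm hef (tieBreak_lt_tieBreak lt), sub_zero]
      rw [Finset.prod_congr rfl edge_off, Finset.prod_const_one, sub_self]
    · exact sub_le_self 1 (Finset.prod_nonneg fun f _ =>
        sub_nonneg.mpr (threshold_le_one _ _ _))

lemma prod_vertexFactor_le_prod_active (hB : M.IsBase (B : Set α)) {g : α → ℕ}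
    (hg : ∀ e, g e < m) :
    ∏ e, vertexFactor B (exchangeNeighbors M B) m e g ≤
      ∏ e ∈ active M (tieBreak (reflect m B g)) B, if e ∈ B then 2 else 0 := by
  rw [← Fintype.prod_ite_mem (active M (tieBreak (reflect m B g)) B)]
  exact Finset.prod_le_prod (fun e _ => vertexFactor_nonneg g)
    fun e _ => vertexFactor_le_ite_active hB hg e

lemma expect_grid_reflect (m : ℕ) (B : Finset α) (F : (α → ℕ) → ℝ) :
    𝔼 g ∈ Fintype.piFinset fun _ => Finset.range m, F (reflect m B g) =
      𝔼 g ∈ Fintype.piFinset fun _ => Finset.range m, F g := by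
  have reflect_mem (g : α → ℕ) (hg : g ∈ Fintype.piFinset fun _ : α => Finset.range m) :
      reflect m B g ∈ Fintype.piFinset fun _ : α => Finset.range m := by
    simp only [Fintype.mem_piFinset, Finset.mem_range, reflect] at hg ⊢
    intro e
    have := hg e
    split_ifs <;> omega
  have reflect_reflect (g : α → ℕ) (hg : g ∈ Fintype.piFinset fun _ : α => Finset.range m) :
      reflect m B (reflect m B g) = g := by
    ext e
    have := Finset.mem_range.mp (Fintype.mem_piFinset.mp hg e)
    simp only [reflect]
    split_ifs <;> omega
  exact Finset.expect_nbij' (reflect m B) (reflect m B) reflect_mem reflect_mem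
    reflect_reflect reflect_reflect fun _ _ => rfl

theorem sum_bases_expect_prod_vertexFactor_le_matroidTutte (M : Matroid α) (hm : 0 < m) :
    ∑ B ∈ bases M, 𝔼 g ∈ Fintype.piFinset fun _ => Finset.range m,
      ∏ e, vertexFactor B (exchangeNeighbors M B) m e g ≤ matroidTutte M 2 0 := by
  have grid_nonempty : (Fintype.piFinset fun _ : α => Finset.range m).Nonempty :=
    Fintype.piFinset_nonempty.mpr fun _ => Finset.nonempty_range_iff.mpr hm.ne'
  calc
    _ ≤ ∑ B ∈ bases M, 𝔼 g ∈ Fintype.piFinset fun _ => Finset.range m,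
        ∏ e ∈ active M (tieBreak (reflect m B g)) B, if e ∈ B then 2 else 0 := by
      refine Finset.sum_le_sum fun B hB => Finset.expect_le_expect fun g hg => ?_
      exact prod_vertexFactor_le_prod_active (mem_bases.mp hB) fun e =>
        Finset.mem_range.mp (Fintype.mem_piFinset.mp hg e)
    _ = ∑ B ∈ bases M, 𝔼 x ∈ Fintype.piFinset fun _ => Finset.range m,
        ∏ e ∈ active M (tieBreak x) B, if e ∈ B then 2 else 0 :=
      Finset.sum_congr rfl fun B _ => expect_grid_reflect m B fun x =>
        ∏ e ∈ active M (tieBreak x) B, if e ∈ B then 2 else 0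
    _ = 𝔼 _x ∈ Fintype.piFinset fun _ => Finset.range m, matroidTutte M 2 0 := by
      rw [← Finset.expect_sum_comm]
      exact Finset.expect_congr rfl fun x _ =>
        (matroidTutte_eq_sum_bases_prod_active M (tieBreak_injective x) 2 0).symm
    _ = matroidTutte M 2 0 := Finset.expect_const grid_nonempty _

end Reorientation

section PowerMeans

open Filter Topology

lemma integral_div_pow {n : ℝ} (hn : n ≠ 0) (d : ℕ) :
    ∫ x in (0 : ℝ)..n, (x / n) ^ d = n * (1 / (d + 1)) := by
  rw [intervalIntegral.integral_comp_div (fun x => x ^ d) hn, zero_div, div_self hn,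
    integral_pow, one_pow, zero_pow d.succ_ne_zero, sub_zero, smul_eq_mul]

lemma monotoneOn_div_pow (n d : ℕ) {s : Set ℝ} (hs : s ⊆ Set.Ici 0) :
    MonotoneOn (fun x : ℝ => (x / n) ^ d) s := by
  intro x hx y _ hxy
  have x_nonneg : 0 ≤ x := hs hx
  dsimp only
  gcongr

lemma expect_range_div_pow_le_inv {n : ℕ} (hn : 0 < n) (d : ℕ) :
    𝔼 l ∈ Finset.range n, (l / n : ℝ) ^ d ≤ 1 / (d + 1) := by
  have hn' : (0 : ℝ) < n := Nat.cast_pos.mpr hn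
  have sum_le_integral :=
    (monotoneOn_div_pow n d (s := Set.Icc 0 (0 + n)) fun _ hx => hx.1).sum_le_integral
  simp only [zero_add] at sum_le_integral
  rw [integral_div_pow hn'.ne'] at sum_le_integral
  rwa [Finset.expect_eq_sum_div_card, Finset.card_range, div_le_iff₀' hn']

lemma inv_le_expect_range_succ_div_pow {n : ℕ} (hn : 0 < n) (d : ℕ) :
    (1 / (d + 1) : ℝ) ≤ 𝔼 l ∈ Finset.range n, ((l + 1) / n : ℝ) ^ d := by
  have hn' : (0 : ℝ) < n := Nat.cast_pos.mpr hn
  have integral_le_sum :=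
    (monotoneOn_div_pow n d (s := Set.Icc 0 (0 + n)) fun _ hx => hx.1).integral_le_sum
  simp only [zero_add, Nat.cast_add_one] at integral_le_sum
  rw [integral_div_pow hn'.ne'] at integral_le_sum
  rwa [Finset.expect_eq_sum_div_card, Finset.card_range, le_div_iff₀' hn']

lemma expect_range_succ_div_pow_le {n : ℕ} (hn : 0 < n) (d : ℕ) :
    𝔼 l ∈ Finset.range n, ((l + 1) / n : ℝ) ^ d ≤
      𝔼 l ∈ Finset.range n, (l / n : ℝ) ^ d + 1 / n := by
  have hn' : (n : ℝ) ≠ 0 := by positivity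
  have telescope := Finset.sum_range_sub (fun l : ℕ => (l / n : ℝ) ^ d) n
  simp only [Nat.cast_add_one, Finset.sum_sub_distrib, div_self hn', one_pow] at telescope
  have pow_nonneg : (0 : ℝ) ≤ ((0 : ℕ) / n : ℝ) ^ d := by positivity
  simp only [Finset.expect_eq_sum_div_card, Finset.card_range, ← add_div]
  gcongr
  linarith

lemma tendsto_expect_range_div_pow (d : ℕ) :
    Tendsto (fun n : ℕ => 𝔼 l ∈ Finset.range n, (l / n : ℝ) ^ d) atTop (𝓝 (1 / (d + 1))) := by
  refine tendsto_of_tendsto_of_tendsto_of_le_of_le'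
    (g := fun n : ℕ => (1 / (d + 1) : ℝ) - 1 / n) ?_ tendsto_const_nhds ?_ ?_
  · simpa using tendsto_const_nhds.sub (tendsto_one_div_atTop_nhds_zero_nat (𝕜 := ℝ))
  · filter_upwards [eventually_gt_atTop 0] with n hn
    linarith [inv_le_expect_range_succ_div_pow hn d, expect_range_succ_div_pow_le hn d]
  · filter_upwards [eventually_gt_atTop 0] with n hn using expect_range_div_pow_le_inv hn d

lemma tendsto_expect_range_succ_div_pow (d : ℕ) :
    Tendsto (fun n : ℕ => 𝔼 l ∈ Finset.range n, ((l + 1) / n : ℝ) ^ d) atTop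
      (𝓝 (1 / (d + 1))) := by
  refine tendsto_of_tendsto_of_tendsto_of_le_of_le' (tendsto_const_nhds (x := (1 / (d + 1) : ℝ)))
    (h := fun n : ℕ => (1 / (d + 1) : ℝ) + 1 / n) ?_ ?_ ?_
  · simpa using tendsto_const_nhds.add (tendsto_one_div_atTop_nhds_zero_nat (𝕜 := ℝ))
  · filter_upwards [eventually_gt_atTop 0] with n hn using inv_le_expect_range_succ_div_pow hn d
  · filter_upwards [eventually_gt_atTop 0] with n hn
    linarith [expect_range_succ_div_pow_le hn d, expect_range_div_pow_le_inv hn d]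

end PowerMeans

section Criterion

open Filter Topology

variable {p : ℝ}

/-- The limit, as `n / m → p` and `n → ∞`, of the factor which an element of a base with `d`
exchange neighbors contributes to `prod_le_expect_grid_prod_vertexFactor`. The fraction is the
integral of `x ^ d` over the unit interval. -/
noncomputable def baseFactor (p : ℝ) (d : ℕ) : ℝ :=
  2 - p + p * (1 / (d + 1))

/-- The counterpart of `baseFactor` for an element outside the base. -/
noncomputable def cobaseFactor (p : ℝ) (d : ℕ) : ℝ :=
  p * (1 - p ^ d * (1 / (d + 1)))

lemma baseFactor_nonneg (h₀ : 0 ≤ p) (h₁ : p ≤ 1) (d : ℕ) : 0 ≤ baseFactor p d :=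
  add_nonneg (by linarith) (by positivity)

lemma cobaseFactor_nonneg (h₀ : 0 ≤ p) (h₁ : p ≤ 1) (d : ℕ) : 0 ≤ cobaseFactor p d := by
  have inv_le_one : (1 : ℝ) / (d + 1) ≤ 1 := div_le_one_of_le₀ (by simp) (by positivity)
  exact mul_nonneg h₀
    (sub_nonneg.mpr (mul_le_one₀ (pow_le_one₀ h₀ h₁) (by positivity) inv_le_one))

lemma tendsto_baseFactor {r : ℕ → ℝ} {n : ℕ → ℕ} (hr : Tendsto r atTop (𝓝 p))
    (hn : Tendsto n atTop atTop) (d : ℕ) :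
    Tendsto (fun m => 2 - r m + r m * 𝔼 l ∈ Finset.range (n m), (l / n m : ℝ) ^ d) atTop
      (𝓝 (baseFactor p d)) :=
  (tendsto_const_nhds.sub hr).add (hr.mul ((tendsto_expect_range_div_pow d).comp hn))

lemma tendsto_cobaseFactor {r : ℕ → ℝ} {n : ℕ → ℕ} (hr : Tendsto r atTop (𝓝 p))
    (hn : Tendsto n atTop atTop) (d : ℕ) :
    Tendsto (fun m => r m * (1 - r m ^ d * 𝔼 l ∈ Finset.range (n m), ((l + 1) / n m : ℝ) ^ d)) atTop
      (𝓝 (cobaseFactor p d)) :=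
  hr.mul (tendsto_const_nhds.sub
    ((hr.pow d).mul ((tendsto_expect_range_succ_div_pow d).comp hn)))

variable {α : Type*} [Fintype α] {M : Matroid α}

/-- The product over all elements of the factor determined by the side of `B` on which the element
lies and by its number of exchange neighbors. -/
noncomputable def baseWeight (M : Matroid α) (p : ℝ) (B : Finset α) : ℝ :=
  ∏ e, if e ∈ B then baseFactor p (exchangeNeighbors M B e).card
    else cobaseFactor p (exchangeNeighbors M B e).card

lemma baseWeight_nonneg (h₀ : 0 ≤ p) (h₁ : p ≤ 1) (B : Finset α) : 0 ≤ baseWeight M p B :=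
  Finset.prod_nonneg fun e _ => by
    split_ifs
    · exact baseFactor_nonneg h₀ h₁ _
    · exact cobaseFactor_nonneg h₀ h₁ _

lemma tendsto_baseWeight {r : ℕ → ℝ} {n : ℕ → ℕ} (hr : Tendsto r atTop (𝓝 p))
    (hn : Tendsto n atTop atTop) (B : Finset α) :
    Tendsto (fun m => ∏ e, if e ∈ B then
        2 - r m + r m * 𝔼 l ∈ Finset.range (n m), (l / n m : ℝ) ^ (exchangeNeighbors M B e).card
      else r m * (1 - r m ^ (exchangeNeighbors M B e).card *
        𝔼 l ∈ Finset.range (n m), ((l + 1) / n m : ℝ) ^ (exchangeNeighbors M B e).card)) atTop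
      (𝓝 (baseWeight M p B)) :=
  tendsto_finsetProd _ fun e _ => by
    split_ifs
    · exact tendsto_baseFactor hr hn _
    · exact tendsto_cobaseFactor hr hn _

theorem sum_baseWeight_le_matroidTutte (M : Matroid α) (h₀ : 0 < p) (h₁ : p ≤ 1) :
    ∑ B ∈ bases M, baseWeight M p B ≤ matroidTutte M 2 0 := by
  have ratio_tendsto : Tendsto (fun m : ℕ => (⌊p * m⌋₊ / m : ℝ)) atTop (𝓝 p) :=
    (tendsto_nat_floor_mul_div_atTop h₀.le).comp tendsto_natCast_atTop_atTop
  have floor_tendsto : Tendsto (fun m : ℕ => ⌊p * m⌋₊) atTop atTop :=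
    tendsto_nat_floor_atTop.comp (tendsto_natCast_atTop_atTop.const_mul_atTop h₀)
  refine le_of_tendsto (tendsto_finsetSum _ fun B _ =>
    tendsto_baseWeight ratio_tendsto floor_tendsto B) ?_
  filter_upwards [eventually_gt_atTop 0, floor_tendsto.eventually_gt_atTop 0] with m hm hn
  have hnm : ⌊p * m⌋₊ ≤ m :=
    Nat.floor_le_of_le (mul_le_of_le_one_left m.cast_nonneg h₁)
  exact (Finset.sum_le_sum fun B hB => prod_le_expect_grid_prod_vertexFactor hn hnm fun e f hf =>
      mem_iff_notMem_of_mem_exchangeNeighbors (mem_bases.mp hB) hf).trans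
    (sum_bases_expect_prod_vertexFactor_le_matroidTutte M hm)

lemma ncard_fundCircuit {B : Finset α} (hB : M.IsBase (B : Set α)) {e : α} (heE : e ∈ M.E)
    (he : e ∉ B) : (M.fundCircuit e B).ncard = (exchangeNeighbors M B e).card + 1 := by
  have notMem : e ∉ exchangeNeighbors M B e := fun h =>
    iff_not_self (mem_iff_notMem_of_mem_exchangeNeighbors hB h)
  rw [← insert_exchangeNeighbors_eq_fundCircuit hB heE he, ← Finset.coe_insert,
    Set.ncard_coe_finset, Finset.card_insert_of_notMem notMem]

lemma exists_isCircuit_ncard_eq_card_exchangeNeighbors_add_one (hE : M.E = Set.univ)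
    {B : Finset α} (hB : M.IsBase (B : Set α)) (e : α) :
    ∃ C, (M.IsCircuit C ∨ M✶.IsCircuit C) ∧ C.ncard = (exchangeNeighbors M B e).card + 1 := by
  by_cases he : e ∈ B
  · have hB' : M✶.IsBase (Bᶜ : Finset α) := by
      rwa [dual_isBase_iff (by simp [hE]), hE, Finset.coe_compl, ← Set.compl_eq_univ_sdiff,
        compl_compl]
    have heE : e ∈ M✶.E := by simp [hE]
    have he' : e ∉ Bᶜ := by simpa using he
    refine ⟨_, Or.inr (hB'.fundCircuit_isCircuit heE (by simpa using he)), ?_⟩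
    rw [ncard_fundCircuit hB' heE he', exchangeNeighbors_dual_compl hE]
  · have heE : e ∈ M.E := hE ▸ Set.mem_univ e
    exact ⟨_, Or.inl (hB.fundCircuit_isCircuit heE (by simpa using he)),
      ncard_fundCircuit hB heE he⟩

lemma baseWeight_mul_baseWeight_dual_compl (hE : M.E = Set.univ) (p : ℝ) (B : Finset α) :
    baseWeight M p B * baseWeight M✶ p Bᶜ =
      ∏ e, baseFactor p (exchangeNeighbors M B e).card *
        cobaseFactor p (exchangeNeighbors M B e).card := by
  rw [baseWeight, baseWeight, ← Finset.prod_mul_distrib]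
  refine Finset.prod_congr rfl fun e _ => ?_
  rw [exchangeNeighbors_dual_compl hE]
  by_cases he : e ∈ B <;> simp [he, mul_comm]

theorem matroidTutte_merino_welsh_of_one_le_factor_mul_factor (hE : M.E = Set.univ)
    (h₀ : 0 < p) (h₁ : p ≤ 1)
    (hC : ∀ C d, M.IsCircuit C ∨ M✶.IsCircuit C → C.ncard = d + 1 →
      1 ≤ baseFactor p d * cobaseFactor p d) :
    matroidTutte M 1 1 ^ 2 ≤ matroidTutte M 2 0 * matroidTutte M 0 2 := by
  have one_le_mul : ∀ B ∈ bases M, 1 ^ 2 ≤ baseWeight M p B * baseWeight M✶ p Bᶜ := fun B hB => by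
    rw [one_pow, baseWeight_mul_baseWeight_dual_compl hE]
    refine Finset.one_le_prod fun e _ => ?_
    obtain ⟨C, hCM, hCd⟩ :=
      exists_isCircuit_ncard_eq_card_exchangeNeighbors_add_one hE (mem_bases.mp hB) e
    exact hC C _ hCM hCd
  have sum_dual_le : ∑ B ∈ bases M, baseWeight M✶ p Bᶜ ≤ matroidTutte M 0 2 := by
    rw [← sum_bases_dual hE, ← matroidTutte_dual hE]
    exact sum_baseWeight_le_matroidTutte M✶ h₀ h₁
  calc matroidTutte M 1 1 ^ 2 = (∑ B ∈ bases M, 1) ^ 2 := by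
        rw [matroidTutte_one_one, Finset.sum_const, nsmul_one]
    _ ≤ (∑ B ∈ bases M, baseWeight M p B) * ∑ B ∈ bases M, baseWeight M✶ p Bᶜ :=
        Finset.sum_sq_le_sum_mul_sum_of_sq_le_mul _ (fun B _ => baseWeight_nonneg h₀.le h₁ B)
          (fun B _ => baseWeight_nonneg h₀.le h₁ Bᶜ) one_le_mul
    _ ≤ matroidTutte M 2 0 * matroidTutte M 0 2 := by
        have weight_nonneg (N : Matroid α) (B : Finset α) := baseWeight_nonneg (M := N) h₀.le h₁ B
        have sum_le := sum_baseWeight_le_matroidTutte M h₀ h₁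
        exact mul_le_mul sum_le sum_dual_le (Finset.sum_nonneg fun B _ => weight_nonneg M✶ Bᶜ)
          ((Finset.sum_nonneg fun B _ => weight_nonneg M B).trans sum_le)

end Criterion

section CircuitLengths

/-- Up to a positive factor, a lower bound of `baseFactor p d * cobaseFactor p d - 1` for
`p = P / (P + 1)` and `D = d + 1`. -/
noncomputable def circuitLengthPoly (P D : ℝ) : ℝ :=
  D * (D * (P ^ 2 - P + 1) - D ^ 2 - 3 * P ^ 2) - P ^ 3

lemma div_add_one_pow_le {P : ℝ} (hP : 0 < P) (d : ℕ) :
    (P / (P + 1)) ^ d ≤ P / (P + d) := by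
  have bernoulli := one_add_mul_le_pow (a := 1 / P) (by have := one_div_pos.mpr hP; linarith) d
  have base_eq : P / (P + 1) = (1 + 1 / P)⁻¹ := by field_simp
  have bound_eq : P / (P + d) = (1 + d * (1 / P))⁻¹ := by field_simp
  rw [base_eq, bound_eq, inv_pow]
  exact inv_anti₀ (by positivity) bernoulli

lemma one_le_factor_mul_factor {P : ℝ} (hP : 0 < P) {d : ℕ}
    (h : 0 ≤ circuitLengthPoly P (d + 1)) :
    1 ≤ baseFactor (P / (P + 1)) d * cobaseFactor (P / (P + 1)) d := by
  have p_nonneg : 0 ≤ P / (P + 1) := by positivity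
  have p_le_one : P / (P + 1) ≤ 1 := div_le_one_of_le₀ (by linarith) (by positivity)
  calc
    1 ≤ 1 + circuitLengthPoly P (d + 1) / ((P + 1) ^ 2 * (d + 1) ^ 2 * (P + d)) :=
      le_add_of_nonneg_right (div_nonneg h (by positivity))
    _ = baseFactor (P / (P + 1)) d * (P / (P + 1) * (1 - P / (P + d) * (1 / (d + 1)))) := by
      rw [baseFactor, circuitLengthPoly]
      field_simp
      ring
    _ ≤ baseFactor (P / (P + 1)) d * cobaseFactor (P / (P + 1)) d := by
      refine mul_le_mul_of_nonneg_left ?_ (baseFactor_nonneg p_nonneg p_le_one d)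
      rw [cobaseFactor]
      gcongr
      exact div_add_one_pow_le hP d

lemma circuitLengthPoly_nonneg_of_le {P a D : ℝ} (ha : 0 < a) (haP : a ≤ P) (haD : a ≤ D)
    (hDP : D ≤ (P - 1) ^ 2) (h : 0 ≤ circuitLengthPoly P a) : 0 ≤ circuitLengthPoly P D := by
  rw [circuitLengthPoly] at h ⊢
  have quadratic_le : a * (P ^ 2 - P + 1) - a ^ 2 ≤ D * (P ^ 2 - P + 1) - D ^ 2 := by
    have : a + D ≤ P ^ 2 - P + 1 := by linarith
    linarith [mul_nonneg (sub_nonneg.mpr haD) (sub_nonneg.mpr this)]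
  have cube_pos : 0 < P ^ 3 := pow_pos (ha.trans_le haP) 3
  have quadratic_nonneg : 0 ≤ a * (P ^ 2 - P + 1) - a ^ 2 - 3 * P ^ 2 :=
    (pos_of_mul_pos_right (by linarith) ha.le).le
  have := mul_le_mul haD (sub_le_sub_right quadratic_le (3 * P ^ 2)) quadratic_nonneg
    (ha.le.trans haD)
  linarith

lemma circuitLengthPoly_sq_add_one_add_two_nonneg {k : ℝ} (hk : 6 ≤ k) :
    0 ≤ circuitLengthPoly (k ^ 2 + 1) (k + 2) := by
  obtain ⟨t, ht, rfl⟩ : ∃ t : ℝ, 0 ≤ t ∧ k = t + 6 := ⟨k - 6, by linarith, by ring⟩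
  rw [circuitLengthPoly]
  ring_nf
  positivity

lemma circuitLengthPoly_sq_add_one_add_three_nonneg {k : ℝ} (hk : 4 ≤ k) :
    0 ≤ circuitLengthPoly (k ^ 2 + 1) (k + 3) := by
  obtain ⟨t, ht, rfl⟩ : ∃ t : ℝ, 0 ≤ t ∧ k = t + 4 := ⟨k - 4, by linarith, by ring⟩
  rw [circuitLengthPoly]
  ring_nf
  positivity

lemma one_le_factor_mul_factor_of_circuit_length {k d : ℕ} (hk : 4 ≤ k) (h₁ : k + 2 ≤ d + 1)
    (h₂ : d + 1 ≤ k ^ 4) :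
    1 ≤ baseFactor ((k ^ 2 + 1) / (k ^ 2 + 1 + 1)) d *
      cobaseFactor ((k ^ 2 + 1) / (k ^ 2 + 1 + 1)) d := by
  have hk' : (4 : ℝ) ≤ k := by exact_mod_cast hk
  have poly_nonneg (a : ℝ) (ha : 0 < a) (hak : a ≤ k + 3) (had : a ≤ d + 1)
      (h : 0 ≤ circuitLengthPoly (k ^ 2 + 1) a) : 0 ≤ circuitLengthPoly (k ^ 2 + 1) (d + 1) := by
    have le_pow : (d + 1 : ℝ) ≤ (k ^ 2 + 1 - 1) ^ 2 := by
      rw [add_sub_cancel_right, ← pow_mul]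
      exact_mod_cast h₂
    exact circuitLengthPoly_nonneg_of_le ha (by nlinarith) had le_pow h
  -- Bernoulli's bound for `p ^ d` is too weak in the last two cases.
  obtain six_le | add_three_le | ⟨rfl, rfl⟩ | ⟨rfl, rfl⟩ :
      6 ≤ k ∨ k + 3 ≤ d + 1 ∨ k = 4 ∧ d = 5 ∨ k = 5 ∧ d = 6 := by omega
  · exact one_le_factor_mul_factor (by positivity) (poly_nonneg (k + 2) (by positivity)
      (by linarith) (by exact_mod_cast h₁)
      (circuitLengthPoly_sq_add_one_add_two_nonneg (by exact_mod_cast six_le)))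
  · exact one_le_factor_mul_factor (by positivity) (poly_nonneg (k + 3) (by positivity)
      le_rfl (by exact_mod_cast add_three_le) (circuitLengthPoly_sq_add_one_add_three_nonneg hk'))
  · norm_num [baseFactor, cobaseFactor]
  · norm_num [baseFactor, cobaseFactor]

end CircuitLengths

/-- If every circuit of `M` and of its dual `M✶` has cardinality between `ℓ` and `(ℓ-2)^4`
for some `ℓ ≥ 6`, then `T_M(2,0) · T_M(0,2) ≥ T_M(1,1)²`. -/
theorem matroidTutte_merino_welsh_of_circuit_lengths
    {α : Type*} [Fintype α] (M : Matroid α) (hE : M.E = Set.univ)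
    (ℓ : ℕ) (hℓ : 6 ≤ ℓ)
    (hC : ∀ C : Set α, IsMatroidCircuit M C → ℓ ≤ C.ncard ∧ C.ncard ≤ (ℓ - 2) ^ 4)
    (hC' : ∀ C : Set α, IsMatroidCircuit M✶ C → ℓ ≤ C.ncard ∧ C.ncard ≤ (ℓ - 2) ^ 4) :
    matroidTutte M 2 0 * matroidTutte M 0 2 ≥ matroidTutte M 1 1 ^ 2 := by
  obtain ⟨k, rfl⟩ : ∃ k, ℓ = k + 2 := ⟨ℓ - 2, by omega⟩
  simp only [isMatroidCircuit_iff_isCircuit, Nat.add_sub_cancel_right] at hC hC'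
  have p_le_one : ((k ^ 2 + 1) / (k ^ 2 + 1 + 1) : ℝ) ≤ 1 :=
    div_le_one_of_le₀ (by linarith) (by positivity)
  refine matroidTutte_merino_welsh_of_one_le_factor_mul_factor hE
    (p := (k ^ 2 + 1) / (k ^ 2 + 1 + 1)) (by positivity) p_le_one fun C d hCM hCd => ?_
  obtain ⟨le_ncard, ncard_le⟩ := hCM.elim (hC C) (hC' C)
  exact one_le_factor_mul_factor_of_circuit_length (by omega) (hCd ▸ le_ncard) (hCd ▸ ncard_le)
end

section
/- Let H = (A, B, E) be a finite bipartite graph and let d_v denote the degree of a vertex v. Suppose that either 0 ≤ x ≤ 1 and y ≥ 1, or 0 ≤ y ≤ 1 and x ≥ 1. Then T̃_H(x,y) ≥ Π_{i ∈ A} (1 + (x−1)/(d_i+1)) · Π_{j ∈ B} (1 + (y−1)/(d_j+1)). -/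
open scoped Classical

/-- The permutation Tutte polynomial of a bipartite graph `G` on finite vertex set `V`
with bipartition class `A` (the other class being `Aᶜ`). -/
noncomputable def permTutte {V : Type*} [Fintype V] [DecidableEq V]
    (G : SimpleGraph V) (A : Set V) (x y : ℝ) : ℝ :=
  ((Fintype.card V).factorial : ℝ)⁻¹ *
    ∑ π : V ≃ Fin (Fintype.card V),
      x ^ Nat.card {i : V // i ∈ A ∧ ∀ j, G.Adj i j → π j < π i} *
      y ^ Nat.card {j : V // j ∉ A ∧ ∀ i, G.Adj j i → π i < π j}

/-- `G` is bipartite with parts `A` and `Aᶜ`. -/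
def IsBipartition {V : Type*} (G : SimpleGraph V) (A : Set V) : Prop :=
  ∀ u v, G.Adj u v → (u ∈ A ↔ v ∉ A)

/-!
Replace the random permutation by independent uniform labels in `Fin N`. Say `x ≤ 1 ≤ y`, and
reverse the labels on `A`. Raising a label can then only destroy activity in `A`, where an active
vertex contributes `x ≤ 1`, and only create activity outside `A`, where it contributes `y ≥ 1`.
So every vertex contributes an increasing function of the labels, and the FKG inequality on the
lattice `V → Fin N` bounds the expectation of the product below by the product of the expectations.

As `N → ∞` the labels become almost surely distinct, and distinct labels induce a uniformly random
order on the vertices. In such an order each vertex of `v`'s closed neighbourhood is equally likely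
to be the largest, so `v` is active with probability `1 / (d_v + 1)`.
-/

section

open Filter Topology
open scoped BigOperators

section FKG

variable {ι α 𝕜 : Type*} [DistribLattice α] [Fintype α] [Nonempty α]
  [Field 𝕜] [LinearOrder 𝕜] [IsStrictOrderedRing 𝕜]

lemma expect_mul_expect_le_expect_mul_of_monotone {f g : α → 𝕜} (hf₀ : 0 ≤ f) (hg₀ : 0 ≤ g)
    (hf : Monotone f) (hg : Monotone g) :
    (𝔼 a, f a) * 𝔼 a, g a ≤ 𝔼 a, f a * g a := by
  have hcard : (0 : 𝕜) < Fintype.card α := by exact_mod_cast Fintype.card_pos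
  have hfkg : (∑ a, f a) * ∑ a, g a ≤ Fintype.card α * ∑ a, f a * g a := by
    simpa using fkg f g (fun _ ↦ 1) (fun _ ↦ zero_le_one) hf₀ hg₀ hf hg (fun _ _ ↦ le_rfl)
  simp only [Fintype.expect_eq_sum_div_card]
  rw [div_mul_div_comm, div_le_div_iff₀ (by positivity) hcard]
  calc (∑ a, f a) * (∑ a, g a) * Fintype.card α
      ≤ Fintype.card α * (∑ a, f a * g a) * Fintype.card α := by gcongr
    _ = (∑ a, f a * g a) * (Fintype.card α * Fintype.card α) := by ring

lemma prod_expect_le_expect_prod_of_monotone (s : Finset ι) {f : ι → α → 𝕜}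
    (hf₀ : ∀ i, 0 ≤ f i) (hf : ∀ i, Monotone (f i)) :
    ∏ i ∈ s, 𝔼 a, f i a ≤ 𝔼 a, ∏ i ∈ s, f i a := by
  induction s using Finset.induction_on with
  | empty => simp
  | insert i s hi ih =>
    simp only [Finset.prod_insert hi]
    calc (𝔼 a, f i a) * ∏ j ∈ s, 𝔼 a, f j a
        ≤ (𝔼 a, f i a) * 𝔼 a, ∏ j ∈ s, f j a :=
          mul_le_mul_of_nonneg_left ih (Finset.expect_nonneg fun a _ ↦ hf₀ i a)
      _ ≤ 𝔼 a, f i a * ∏ j ∈ s, f j a :=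
          expect_mul_expect_le_expect_mul_of_monotone (hf₀ i)
            (fun a ↦ Finset.prod_nonneg fun j _ ↦ hf₀ j a) (hf i)
            (fun a b hab ↦ Finset.prod_le_prod (fun j _ ↦ hf₀ j a) fun j _ ↦ hf j hab)

end FKG

/-- The strict relation that a labelling induces on the labelled set. Order statistics of
labellings are written as functions of this relation, so that one statistic makes sense for labels
in any ordered type, with or without ties. -/
def labelOrder {V α : Type*} [LT α] (a : V → α) : V → V → Prop := a ⁻¹'o (· < ·)

lemma expect_ite_injective {V α 𝕜 : Type*} [Fintype V] [DecidableEq V] [Fintype α]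
    [DecidableEq α] [Semifield 𝕜] [CharZero 𝕜] :
    𝔼 a : V → α, (if Function.Injective a then (1 : 𝕜) else 0) =
      (Fintype.card α).descFactorial (Fintype.card V) / (Fintype.card α : 𝕜) ^ Fintype.card V := by
  have injective_card : Finset.card {a : V → α | Function.Injective a} =
      (Fintype.card α).descFactorial (Fintype.card V) := by
    rw [← Fintype.card_subtype,
      Fintype.card_congr (Equiv.subtypeInjectiveEquivEmbedding V α),
      Fintype.card_embedding_eq]
  rw [Fintype.expect_eq_sum_div_card, Finset.sum_boole, injective_card, Fintype.card_fun,
    Nat.cast_pow]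

section RandomLabels

variable {V α : Type*} [Fintype V] [LinearOrder α]

lemma exists_equiv_fin_labelOrder_eq {a : V → α} (ha : Function.Injective a) :
    ∃ π : V ≃ Fin (Fintype.card V), labelOrder π = labelOrder a := by
  let : LinearOrder V := LinearOrder.lift' a ha
  let rank := (Fintype.orderIsoFinOfCardEq V rfl).symm
  exact ⟨rank.toEquiv, funext₂ fun _ _ ↦ propext rank.lt_iff_lt⟩

variable [DecidableEq V] [Fintype α]

/-- Relabelling by a permutation `σ` of `V` preserves the sum over embeddings, and for a fixed
embedding the orders obtained from all `σ` are those of the bijections `V ≃ Fin (card V)`. -/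
lemma sum_embedding_labelOrder {M : Type*} [AddCommMonoid M] [Module ℚ≥0 M]
    (g : (V → V → Prop) → M) :
    ∑ a : V ↪ α, g (labelOrder a) =
      Fintype.card (V ↪ α) • 𝔼 π : V ≃ Fin (Fintype.card V), g (labelOrder π) := by
  have sum_comp_perm (σ : Equiv.Perm V) :
      ∑ a : V ↪ α, g (labelOrder (a ∘ σ)) = ∑ a : V ↪ α, g (labelOrder a) :=
    Equiv.sum_comp (Equiv.embeddingCongr σ.symm (Equiv.refl α)) fun a ↦ g (labelOrder a)
  have expect_comp_perm (a : V ↪ α) : 𝔼 σ : Equiv.Perm V, g (labelOrder (a ∘ σ)) =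
      𝔼 π : V ≃ Fin (Fintype.card V), g (labelOrder π) := by
    obtain ⟨π, hπ⟩ := exists_equiv_fin_labelOrder_eq a.injective
    refine Fintype.expect_equiv (Equiv.equivCongr (Equiv.refl V) π) _ _ fun σ ↦ congrArg g ?_
    exact funext₂ fun u v ↦ (congrFun₂ hπ (σ u) (σ v)).symm
  calc ∑ a : V ↪ α, g (labelOrder a)
      = 𝔼 σ : Equiv.Perm V, ∑ a : V ↪ α, g (labelOrder (a ∘ σ)) := by
        simp only [sum_comp_perm, Fintype.expect_const]
    _ = ∑ a : V ↪ α, 𝔼 σ : Equiv.Perm V, g (labelOrder (a ∘ σ)) := Finset.expect_sum_comm _ _ _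
    _ = Fintype.card (V ↪ α) • 𝔼 π : V ≃ Fin (Fintype.card V), g (labelOrder π) := by
        simp only [expect_comp_perm, Finset.sum_const, Finset.card_univ]

lemma abs_expect_labelOrder_sub_le {g : (V → V → Prop) → ℝ} {C : ℝ} [Nonempty α]
    (hC : ∀ r, |g r - 𝔼 π : V ≃ Fin (Fintype.card V), g (labelOrder π)| ≤ C) :
    |(𝔼 a : V → α, g (labelOrder a)) - 𝔼 π : V ≃ Fin (Fintype.card V), g (labelOrder π)| ≤
      C * 𝔼 a : V → α, if Function.Injective a then 0 else 1 := by
  set E := 𝔼 π : V ≃ Fin (Fintype.card V), g (labelOrder π) with hE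
  have : Nonempty (V ≃ Fin (Fintype.card V)) := ⟨Fintype.equivFin V⟩
  have injective_sum : ∑ a : V → α with Function.Injective a, (g (labelOrder a) - E) = 0 := by
    calc ∑ a : V → α with Function.Injective a, (g (labelOrder a) - E)
        = ∑ a : {a : V → α // Function.Injective a}, (g (labelOrder a.1) - E) :=
          Finset.sum_subtype _ (by simp) _
      _ = ∑ a : V ↪ α, (g (labelOrder a) - E) :=
          (Equiv.subtypeInjectiveEquivEmbedding V α).sum_comp fun a ↦ g (labelOrder a) - E
      _ = 0 := by
          rw [sum_embedding_labelOrder fun r ↦ g r - E, Finset.expect_sub_distrib,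
            Fintype.expect_const, ← hE, sub_self, smul_zero]
  have not_injective_only : (𝔼 a : V → α, g (labelOrder a)) - E =
      𝔼 a : V → α, if Function.Injective a then 0 else g (labelOrder a) - E := by
    rw [← Fintype.expect_const (ι := V → α) E, ← Finset.expect_sub_distrib, Fintype.expect_const,
      Fintype.expect_eq_sum_div_card, Fintype.expect_eq_sum_div_card,
      ← Finset.sum_filter_add_sum_filter_not _ Function.Injective, injective_sum, zero_add,
      Finset.sum_filter]
    simp only [ite_not]
  rw [not_injective_only, Finset.mul_expect]
  refine (Finset.abs_expect_le _ _).trans (Finset.expect_le_expect fun a _ ↦ ?_)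
  split_ifs
  · simp
  · simpa using hC (labelOrder a)

lemma tendsto_expect_not_injective :
    Tendsto (fun N : ℕ ↦ 𝔼 a : V → Fin N, if Function.Injective a then (0 : ℝ) else 1)
      atTop (𝓝 0) := by
  have injective_ratio : Tendsto
      (fun N : ℕ ↦ (N.descFactorial (Fintype.card V) : ℝ) / (N : ℝ) ^ Fintype.card V)
      atTop (𝓝 1) := by
    refine (Asymptotics.isEquivalent_iff_tendsto_one ?_).1 (isEquivalent_descFactorial _)
    filter_upwards [eventually_gt_atTop 0] with N hN
    positivity
  have not_injective_ratio := injective_ratio.const_sub 1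
  rw [sub_self] at not_injective_ratio
  refine not_injective_ratio.congr' ?_
  filter_upwards [eventually_gt_atTop 0] with N hN
  have : Nonempty (Fin N) := ⟨⟨0, hN⟩⟩
  have complement (a : V → Fin N) : (if Function.Injective a then (0 : ℝ) else 1) =
      1 - if Function.Injective a then 1 else 0 := by split_ifs <;> norm_num
  simp only [complement, Finset.expect_sub_distrib, Fintype.expect_const, expect_ite_injective,
    Fintype.card_fin]

lemma tendsto_expect_labelOrder (g : (V → V → Prop) → ℝ) :
    Tendsto (fun N : ℕ ↦ 𝔼 a : V → Fin N, g (labelOrder a)) atTop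
      (𝓝 (𝔼 π : V ≃ Fin (Fintype.card V), g (labelOrder π))) := by
  obtain ⟨C, hC⟩ := Set.finite_range
    (fun r ↦ |g r - 𝔼 π : V ≃ Fin (Fintype.card V), g (labelOrder π)|) |>.bddAbove
  rw [mem_upperBounds, Set.forall_mem_range] at hC
  rw [tendsto_iff_norm_sub_tendsto_zero]
  refine squeeze_zero' (.of_forall fun N ↦ norm_nonneg _) ?_
    (by simpa using (tendsto_expect_not_injective (V := V)).const_mul C)
  filter_upwards [eventually_gt_atTop 0] with N hN
  have : Nonempty (Fin N) := ⟨⟨0, hN⟩⟩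
  exact abs_expect_labelOrder_sub_le hC

lemma expect_ite_forall_le {𝕜 : Type*} [Semifield 𝕜] [CharZero 𝕜] [Nonempty (V ≃ α)] {K : Finset V}
    {v : V} (hv : v ∈ K) :
    𝔼 π : V ≃ α, (if ∀ w ∈ K, π w ≤ π v then (1 : 𝕜) else 0) = (K.card : 𝕜)⁻¹ := by
  let isMax (u : V) (π : V ≃ α) : Prop := ∀ w ∈ K, π w ≤ π u
  have symmetric (u : V) (hu : u ∈ K) :
      𝔼 π : V ≃ α, (if isMax u π then (1 : 𝕜) else 0) = 𝔼 π, if isMax v π then 1 else 0 := by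
    refine Fintype.expect_equiv (Equiv.equivCongr (Equiv.swap u v) (Equiv.refl α)) _ _ fun π ↦ ?_
    have swap_mem {w : V} (hw : w ∈ K) : Equiv.swap u v w ∈ K := by
      rw [Equiv.swap_apply_def]
      split_ifs <;> assumption
    refine if_congr ⟨fun h w hw ↦ ?_, fun h w hw ↦ ?_⟩ rfl rfl
    · simpa using h _ (swap_mem hw)
    · simpa using h _ (swap_mem hw)
  have unique_max (π : V ≃ α) : ∑ u ∈ K, (if isMax u π then (1 : 𝕜) else 0) = 1 := by
    obtain ⟨u, hu, hmax⟩ := K.exists_max_image π ⟨v, hv⟩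
    rw [Finset.sum_eq_single_of_mem u hu, if_pos hmax]
    intro w hw hwu
    exact if_neg fun h ↦ hwu (π.injective ((hmax w hw).antisymm (h u hu)))
  have total : (K.card : 𝕜) * 𝔼 π : V ≃ α, (if isMax v π then (1 : 𝕜) else 0) = 1 := by
    calc (K.card : 𝕜) * 𝔼 π : V ≃ α, (if isMax v π then (1 : 𝕜) else 0)
        = ∑ u ∈ K, 𝔼 π : V ≃ α, (if isMax u π then (1 : 𝕜) else 0) := by
          rw [Finset.sum_congr rfl symmetric, Finset.sum_const, nsmul_eq_mul]
      _ = 𝔼 π : V ≃ α, ∑ u ∈ K, (if isMax u π then (1 : 𝕜) else 0) :=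
          (Finset.expect_sum_comm _ _ _).symm
      _ = 1 := by simp only [unique_max, Fintype.expect_const]
  exact eq_inv_of_mul_eq_one_right total

end RandomLabels

section Activity

variable {V α : Type*} {G : SimpleGraph V} {c : V → ℝ} {v : V}

/-- The vertex `v` is active in the strict relation `r` if it lies above all its neighbours. For a
bipartite graph this is internal or external activity, according to the class of `v`. -/
def IsActive (G : SimpleGraph V) (r : V → V → Prop) (v : V) : Prop :=
  ∀ j, G.Adj v j → r j v

/-- The factor contributed by `v` to the activity generating function in which each vertex `u` has
its own variable `c u`. -/
noncomputable def activityWeight (G : SimpleGraph V) (c : V → ℝ) (v : V) (r : V → V → Prop) : ℝ :=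
  if IsActive G r v then c v else 1

lemma activityWeight_nonneg (hc : 0 ≤ c v) (r : V → V → Prop) : 0 ≤ activityWeight G c v r := by
  unfold activityWeight
  split_ifs
  exacts [hc, zero_le_one]

lemma IsActive.mono [Preorder α] {a b : V → α} (h : IsActive G (labelOrder a) v)
    (hv : a v ≤ b v) (hadj : ∀ j, G.Adj v j → b j ≤ a j) : IsActive G (labelOrder b) v :=
  fun j hj ↦ (hadj j hj).trans_lt (lt_of_lt_of_le (h j hj) hv)

lemma IsBipartition.compl {A : Set V} (h : IsBipartition G A) : IsBipartition G Aᶜ :=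
  fun u v huv ↦ not_congr (h u v huv)

lemma IsBipartition.activityWeight_le [Preorder α] {S : Set V} (hS : IsBipartition G S)
    (hc_le : ∀ u ∈ S, c u ≤ 1) (hc_ge : ∀ u ∉ S, 1 ≤ c u) {a b : V → α}
    (h_anti : ∀ u ∈ S, b u ≤ a u) (h_mono : ∀ u ∉ S, a u ≤ b u) :
    activityWeight G c v (labelOrder a) ≤ activityWeight G c v (labelOrder b) := by
  unfold activityWeight
  by_cases hv : v ∈ S
  · have active_imp : IsActive G (labelOrder b) v → IsActive G (labelOrder a) v := fun h ↦
      h.mono (h_anti v hv) fun j hj ↦ h_mono j ((hS v j hj).1 hv)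
    split_ifs with ha hb hb
    exacts [le_rfl, hc_le v hv, absurd (active_imp hb) ha, le_rfl]
  · have active_imp : IsActive G (labelOrder a) v → IsActive G (labelOrder b) v := fun h ↦
      h.mono (h_mono v hv) fun j hj ↦ h_anti j (by_contra fun hj' ↦ hv ((hS v j hj).2 hj'))
    split_ifs with ha hb hb
    exacts [le_rfl, absurd (active_imp ha) hb, hc_ge v hv, le_rfl]

end Activity

lemma pow_card_subtype_and {V M : Type*} [Fintype V] [CommMonoid M] (p q : V → Prop)
    [DecidablePred p] [DecidablePred q] (x : M) :
    x ^ Nat.card {v // p v ∧ q v} = ∏ v with p v, if q v then x else 1 := by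
  rw [Nat.card_eq_fintype_card, Fintype.card_subtype, Finset.prod_ite, Finset.prod_const,
    Finset.prod_const_one, mul_one, Finset.filter_filter]

section Expectation

variable {V : Type*} [Fintype V] [DecidableEq V] {G : SimpleGraph V} {c : V → ℝ}

lemma IsBipartition.prod_expect_activityWeight_le {S : Set V} (hS : IsBipartition G S)
    (hc₀ : ∀ v, 0 ≤ c v) (hc_le : ∀ v ∈ S, c v ≤ 1) (hc_ge : ∀ v ∉ S, 1 ≤ c v)
    (N : ℕ) [NeZero N] :
    ∏ v, 𝔼 a : V → Fin N, activityWeight G c v (labelOrder a) ≤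
      𝔼 a : V → Fin N, ∏ v, activityWeight G c v (labelOrder a) := by
  let reverseOn : (V → Fin N) ≃ (V → Fin N) :=
    Equiv.piCongrRight fun v ↦ if v ∈ S then Fin.revPerm else Equiv.refl _
  have expect_reverseOn (f : (V → Fin N) → ℝ) : 𝔼 a, f (reverseOn a) = 𝔼 a, f a :=
    Fintype.expect_equiv reverseOn _ _ fun _ ↦ rfl
  have monotone_weight (v : V) :
      Monotone fun a ↦ activityWeight G c v (labelOrder (reverseOn a)) := fun a b hab ↦
    hS.activityWeight_le hc_le hc_ge
      (fun u hu ↦ by simpa [reverseOn, hu] using hab u)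
      (fun u hu ↦ by simpa [reverseOn, hu] using hab u)
  calc ∏ v, 𝔼 a, activityWeight G c v (labelOrder a)
      = ∏ v, 𝔼 a, activityWeight G c v (labelOrder (reverseOn a)) :=
        Finset.prod_congr rfl fun v _ ↦
          (expect_reverseOn fun a ↦ activityWeight G c v (labelOrder a)).symm
    _ ≤ 𝔼 a, ∏ v, activityWeight G c v (labelOrder (reverseOn a)) :=
        prod_expect_le_expect_prod_of_monotone _
          (fun v _ ↦ activityWeight_nonneg (hc₀ v) _) monotone_weight
    _ = 𝔼 a, ∏ v, activityWeight G c v (labelOrder a) :=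
        expect_reverseOn fun a ↦ ∏ v, activityWeight G c v (labelOrder a)

lemma expect_activityWeight [DecidableRel G.Adj] (v : V) :
    𝔼 π : V ≃ Fin (Fintype.card V), activityWeight G c v (labelOrder π) =
      1 + (c v - 1) / ((G.degree v : ℝ) + 1) := by
  have : Nonempty (V ≃ Fin (Fintype.card V)) := ⟨Fintype.equivFin V⟩
  let K := insert v (G.neighborFinset v)
  have hK : (K.card : ℝ) = G.degree v + 1 := by
    simp [K, Finset.card_insert_of_notMem]
  have active_iff (π : V ≃ Fin (Fintype.card V)) :
      IsActive G (labelOrder π) v ↔ ∀ w ∈ K, π w ≤ π v := by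
    simp only [K, Finset.forall_mem_insert, le_refl, true_and, SimpleGraph.mem_neighborFinset]
    exact forall₂_congr fun w hw ↦ ((π.injective.ne hw.ne').le_iff_lt).symm
  have weight_eq (π : V ≃ Fin (Fintype.card V)) : activityWeight G c v (labelOrder π) =
      1 + (c v - 1) * if ∀ w ∈ K, π w ≤ π v then 1 else 0 := by
    simp only [activityWeight, active_iff]
    split_ifs <;> ring
  simp only [weight_eq, Finset.expect_add_distrib, ← Finset.mul_expect, Fintype.expect_const]
  rw [expect_ite_forall_le (Finset.mem_insert_self v _), hK, div_eq_mul_inv]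

theorem IsBipartition.prod_degree_le_expect_prod_activityWeight [DecidableRel G.Adj] {S : Set V}
    (hS : IsBipartition G S) (hc₀ : ∀ v, 0 ≤ c v) (hc_le : ∀ v ∈ S, c v ≤ 1)
    (hc_ge : ∀ v ∉ S, 1 ≤ c v) :
    ∏ v, (1 + (c v - 1) / ((G.degree v : ℝ) + 1)) ≤
      𝔼 π : V ≃ Fin (Fintype.card V), ∏ v, activityWeight G c v (labelOrder π) := by
  simp only [← expect_activityWeight]
  refine le_of_tendsto_of_tendsto
    (tendsto_finsetProd _ fun v _ ↦ tendsto_expect_labelOrder (activityWeight G c v))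
    (tendsto_expect_labelOrder fun r ↦ ∏ v, activityWeight G c v r) ?_
  filter_upwards [eventually_ne_atTop 0] with N hN
  have : NeZero N := ⟨hN⟩
  exact hS.prod_expect_activityWeight_le hc₀ hc_le hc_ge N

lemma permTutte_eq_expect (G : SimpleGraph V) (A : Set V) (x y : ℝ) :
    permTutte G A x y = 𝔼 π : V ≃ Fin (Fintype.card V),
      ∏ v, activityWeight G (fun u ↦ if u ∈ A then x else y) v (labelOrder π) := by
  rw [permTutte, Fintype.expect_eq_sum_div_card, Fintype.card_equiv (Fintype.equivFin V),
    div_eq_inv_mul]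
  congr! 2 with π
  rw [pow_card_subtype_and, pow_card_subtype_and,
    ← Finset.prod_filter_mul_prod_filter_not Finset.univ (· ∈ A)]
  congr 1
  all_goals
    refine Finset.prod_congr rfl fun v hv ↦ ?_
    have hvA := (Finset.mem_filter.1 hv).2
    simp only [activityWeight, hvA, if_true]
    exact if_congr Iff.rfl rfl rfl

end Expectation

end

/-- For a finite bipartite graph `H = (A, B, E)` and `0 ≤ x ≤ 1, y ≥ 1` or `0 ≤ y ≤ 1, x ≥ 1`,
`T̃_H(x,y) ≥ Π_{i∈A} (1+(x−1)/(d_i+1)) · Π_{j∈B} (1+(y−1)/(d_j+1))`. -/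
theorem permTutte_ge_prod_degrees
    {V : Type*} [Fintype V] [DecidableEq V] (G : SimpleGraph V) [DecidableRel G.Adj]
    (A : Set V) (hbip : IsBipartition G A) (x y : ℝ)
    (hxy : (0 ≤ x ∧ x ≤ 1 ∧ 1 ≤ y) ∨ (0 ≤ y ∧ y ≤ 1 ∧ 1 ≤ x)) :
    permTutte G A x y ≥
      (∏ i ∈ Finset.univ.filter (· ∈ A), (1 + (x - 1) / ((G.degree i : ℝ) + 1))) *
      ∏ j ∈ Finset.univ.filter (· ∉ A), (1 + (y - 1) / ((G.degree j : ℝ) + 1)) := by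
  set c : V → ℝ := fun v ↦ if v ∈ A then x else y
  have hA : ∀ v ∈ A, c v = x := fun v hv ↦ if_pos hv
  have hB : ∀ v ∉ A, c v = y := fun v hv ↦ if_neg hv
  have hprod : (∏ i ∈ Finset.univ.filter (· ∈ A), (1 + (x - 1) / ((G.degree i : ℝ) + 1))) *
      ∏ j ∈ Finset.univ.filter (· ∉ A), (1 + (y - 1) / ((G.degree j : ℝ) + 1)) =
      ∏ v, (1 + (c v - 1) / ((G.degree v : ℝ) + 1)) := by
    rw [← Finset.prod_filter_mul_prod_filter_not Finset.univ (· ∈ A)]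
    congr 1 <;> refine Finset.prod_congr rfl fun v hv ↦ ?_
    · rw [hA v (Finset.mem_filter.1 hv).2]
    · rw [hB v (Finset.mem_filter.1 hv).2]
  rw [ge_iff_le, hprod, permTutte_eq_expect]
  rcases hxy with ⟨hx₀, hx₁, hy₁⟩ | ⟨hy₀, hy₁, hx₁⟩
  · exact hbip.prod_degree_le_expect_prod_activityWeight (by grind) (by grind) (by grind)
  · exact hbip.compl.prod_degree_le_expect_prod_activityWeight (by grind) (by grind) (by grind)
end

section
/- Let x = (3+√5)/2. Then for every finite bipartite graph H with minimum degree at least 1, T̃_H(x,0) · T̃_H(0,x) ≥ 1. -/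
open scoped Classical

/-!
Label the vertices independently and uniformly by `0, …, N - 1` and refine the labelling to a random
permutation. If ties are counted unfavourably, every vertex contributes at most what it contributes
for the permutation, so `T̃_H(x, 0)` is at least an expectation over independent labels.

Choose a maximal set `L` of vertices of degree one whose neighbours lie outside `L`, and group each
remaining (core) vertex with its neighbours in `L`. The weight of such a block increases with the
labels on `A` and decreases with the labels off `A`, so Harris' inequality bounds the expectation of
the product of the block weights below by the product of their expectations. Before it is applied,
the labels of the core vertices off `A` are conditioned to be less than `m`. This costs a factor
`m / N` for each of them, but makes it easier for their neighbours in `A` to be active.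

A core vertex with `k` neighbours in `L` and `D` in the core then contributes a factor depending
only on `k`, `D` and the side it lies on. Multiplying the bounds for `A` and `Aᶜ` pairs the two
sides, and for `x = 5 / 2`, `N = 32`, `m = 24` the product of the two factors is at least `1` unless
`k = 0` and `D ≤ 1`, which the maximality of `L` excludes. Larger `x` follow by monotonicity.
-/

section PendantSet

variable {V : Type*} {G : SimpleGraph V} {L : Set V}

/-- A set `L` of vertices of degree one, each of whose unique neighbours lies outside `L`.
The vertices outside `L` are called the core. -/
def IsPendantSet (G : SimpleGraph V) (L : Set V) : Prop :=
  ∀ l ∈ L, ∃ c ∉ L, ∀ w, G.Adj l w ↔ w = c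

/-- The neighbours of `v` in the pendant set `L`. -/
noncomputable def pendantNeighbors [Fintype V] (G : SimpleGraph V) (L : Set V) (v : V) :
    Finset V :=
  {w ∈ G.neighborFinset v | w ∈ L}

/-- The neighbours of `v` in the core, the complement of `L`. -/
noncomputable def coreNeighbors [Fintype V] (G : SimpleGraph V) (L : Set V) (v : V) :
    Finset V :=
  {w ∈ G.neighborFinset v | w ∉ L}

lemma mem_pendantNeighbors [Fintype V] {v w : V} :
    w ∈ pendantNeighbors G L v ↔ G.Adj v w ∧ w ∈ L := by
  simp [pendantNeighbors]

lemma mem_coreNeighbors [Fintype V] {v w : V} :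
    w ∈ coreNeighbors G L v ↔ G.Adj v w ∧ w ∉ L := by
  simp [coreNeighbors]

lemma IsPendantSet.insert {v c : V} (hL : IsPendantSet G L) (hv : ∀ w ∈ L, ¬G.Adj v w)
    (hvc : ∀ w, G.Adj v w ↔ w = c) : IsPendantSet G (insert v L) := by
  rintro l (rfl | hl)
  · have hlc : G.Adj l c := (hvc c).2 rfl
    refine ⟨c, ?_, hvc⟩
    rintro (hcl | hcL)
    · exact hlc.ne hcl.symm
    · exact hv c hcL hlc
  · obtain ⟨d, hdL, hld⟩ := hL l hl
    refine ⟨d, ?_, hld⟩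
    rintro (rfl | hdL')
    · exact hv l hl ((hld d).2 rfl).symm
    · exact hdL hdL'

/-- A pendant set that is maximal for inclusion works. -/
lemma exists_isPendantSet_forall_notMem [Fintype V] (hG : ∀ v, ∃ w, G.Adj v w) :
    ∃ L, IsPendantSet G L ∧ ∀ v ∉ L,
      0 < (pendantNeighbors G L v).card ∨ 2 ≤ (coreNeighbors G L v).card := by
  obtain ⟨L, hL, hmax⟩ := (Set.toFinite {L | IsPendantSet G L}).exists_maximal
    ⟨∅, fun _ hl => hl.elim⟩
  refine ⟨L, hL, fun v hvL => ?_⟩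
  by_contra! hfew
  have hnone : ∀ w ∈ L, ¬G.Adj v w := fun w hw hvw =>
    hfew.1.not_gt (Finset.card_pos.2 ⟨w, mem_pendantNeighbors.2 ⟨hvw, hw⟩⟩)
  obtain ⟨c, hvc⟩ := hG v
  have hcore : ∀ w, G.Adj v w → w ∈ coreNeighbors G L v := fun w hvw =>
    mem_coreNeighbors.2 ⟨hvw, fun hw => hnone w hw hvw⟩
  have huniq : ∀ w, G.Adj v w ↔ w = c := fun w =>
    ⟨fun hvw => Finset.card_le_one.1 (Nat.le_of_lt_succ hfew.2) w (hcore w hvw) c (hcore c hvc),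
      fun hw => hw ▸ hvc⟩
  exact hvL (hmax (hL.insert hnone huniq) (Set.subset_insert v L) (Set.mem_insert v L))

end PendantSet

section LocalWeight

variable {V : Type*} {G : SimpleGraph V} {A : Set V} {x : ℝ}

lemma IsBipartition.compl_s16 (hbip : IsBipartition G A) : IsBipartition G Aᶜ := fun u v huv =>
  not_congr (hbip u v huv)

/-- The contribution of the vertex `v` to `x ^ ia * 0 ^ ea`, for a labelling `t` in which labels
may coincide. Ties are resolved so as to make the contribution small: a vertex of `A` has to beat
its neighbours strictly, and a vertex outside `A` has to be beaten strictly. -/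
noncomputable def localWeight {α : Type*} [LT α] (G : SimpleGraph V) (A : Set V) (x : ℝ)
    (t : V → α) (v : V) : ℝ :=
  if v ∈ A then if ∀ w, G.Adj v w → t w < t v then x else 1
  else if ∃ w, G.Adj v w ∧ t v < t w then 1 else 0

lemma localWeight_nonneg {α : Type*} [LT α] (hx : 0 ≤ x) (t : V → α) (v : V) :
    0 ≤ localWeight G A x t v := by
  unfold localWeight
  split_ifs <;> first | exact hx | norm_num

lemma localWeight_le_localWeight {α β : Type*} [LT α] [LT β] (hbip : IsBipartition G A)
    (hx : 1 ≤ x) {t : V → α} {t' : V → β} (h : ∀ u ∉ A, ∀ v ∈ A, t u < t v → t' u < t' v) (v : V) :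
    localWeight G A x t v ≤ localWeight G A x t' v := by
  by_cases hv : v ∈ A
  · have himp : (∀ w, G.Adj v w → t w < t v) → ∀ w, G.Adj v w → t' w < t' v :=
      fun ht w hvw => h w ((hbip v w hvw).1 hv) v hv (ht w hvw)
    simp only [localWeight, hv, if_true]
    split_ifs with ht ht'
    exacts [le_rfl, absurd (himp ht) ht', hx, le_rfl]
  · have himp : (∃ w, G.Adj v w ∧ t v < t w) → ∃ w, G.Adj v w ∧ t' v < t' w :=
      fun ⟨w, hvw, hlt⟩ => ⟨w, hvw, h v hv w (not_not.1 (mt (hbip v w hvw).2 hv)) hlt⟩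
    simp only [localWeight, hv, if_false]
    split_ifs with ht ht'
    exacts [le_rfl, absurd (himp ht) ht', zero_le_one, le_rfl]

lemma pow_natCard_subtype_eq_prod_ite [Fintype V] (a : ℝ) (p : V → Prop) :
    a ^ Nat.card {v // p v} = ∏ v, if p v then a else 1 := by
  rw [Nat.card_eq_fintype_card, Fintype.card_subtype, Finset.prod_ite, Finset.prod_const,
    Finset.prod_const_one, mul_one]

lemma permTutte_zero_right [Fintype V] [DecidableEq V] (G : SimpleGraph V) (A : Set V) (x : ℝ) :
    permTutte G A x 0 = ((Fintype.card V).factorial : ℝ)⁻¹ *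
      ∑ π : V ≃ Fin (Fintype.card V), ∏ v, localWeight G A x π v := by
  refine congrArg _ (Finset.sum_congr rfl fun π _ => ?_)
  rw [pow_natCard_subtype_eq_prod_ite, pow_natCard_subtype_eq_prod_ite, ← Finset.prod_mul_distrib]
  refine Finset.prod_congr rfl fun v _ => ?_
  by_cases hv : v ∈ A
  · simp [localWeight, hv]
  · have hmax : (∀ w, G.Adj v w → π w < π v) ↔ ¬∃ w, G.Adj v w ∧ π v < π w := by
      push Not
      exact forall₂_congr fun w hvw =>
        (π.injective.ne hvw.ne').le_iff_lt.symm
    simp only [localWeight, hv, hmax]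
    split_ifs <;> simp_all

lemma permTutte_compl [Fintype V] [DecidableEq V] (G : SimpleGraph V) (A : Set V) (x y : ℝ) :
    permTutte G Aᶜ x y = permTutte G A y x := by
  refine congrArg _ (Finset.sum_congr rfl fun π _ => ?_)
  rw [mul_comm]
  simp only [Set.mem_compl_iff, not_not]

lemma exists_equiv_fin_forall_lt_of_lt {α : Type*} [LinearOrder α] [Fintype V] (t : V → α) :
    ∃ π : V ≃ Fin (Fintype.card V), ∀ u v, t u < t v → π u < π v := by
  let e := Fintype.equivFin V
  let σ := Tuple.sort (t ∘ e.symm)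
  refine ⟨e.trans σ.symm, fun u v huv => not_le.1 fun hle => huv.not_ge ?_⟩
  simpa [σ] using Tuple.monotone_sort (t ∘ e.symm) hle

lemma factorial_mul_sum_le_of_forall_le {α : Type*} [LinearOrder α] [Fintype α] [Fintype V]
    [DecidableEq V] (F : (V → α) → ℝ) (H : (V ≃ Fin (Fintype.card V)) → ℝ)
    (hFH : ∀ t π, (∀ u v, t u < t v → π u < π v) → F t ≤ H π) :
    (Fintype.card V).factorial * ∑ t, F t ≤ (Fintype.card α : ℝ) ^ Fintype.card V * ∑ π, H π := by
  choose π hπ using exists_equiv_fin_forall_lt_of_lt (V := V) (α := α)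
  have hrelabel : ∀ σ : Equiv.Perm V, ∑ t : V → α, F (t ∘ σ) = ∑ t, F t := fun σ =>
    Equiv.sum_comp (Equiv.arrowCongr σ.symm (Equiv.refl α)) F
  calc ((Fintype.card V).factorial : ℝ) * ∑ t, F t
      = ∑ σ : Equiv.Perm V, ∑ t : V → α, F (t ∘ σ) := by
        simp only [hrelabel, Finset.sum_const, Finset.card_univ, Fintype.card_perm, nsmul_eq_mul]
    _ ≤ ∑ σ : Equiv.Perm V, ∑ t : V → α, H (σ.trans (π t)) :=
        Finset.sum_le_sum fun σ _ => Finset.sum_le_sum fun t _ =>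
          hFH _ _ fun u v huv => hπ t _ _ huv
    _ = ∑ t : V → α, ∑ ρ, H ρ := by
        rw [Finset.sum_comm]
        exact Finset.sum_congr rfl fun t _ =>
          Equiv.sum_comp (Equiv.equivCongr (Equiv.refl V) (π t)) H
    _ = (Fintype.card α : ℝ) ^ Fintype.card V * ∑ π, H π := by
        simp

/-- A uniformly random labelling, refined to a permutation after uniformly random relabelling of
the vertices, is a uniformly random permutation. -/
lemma sum_prod_localWeight_le_permTutte {α : Type*} [LinearOrder α] [Fintype α] [Nonempty α]
    [Fintype V] [DecidableEq V] (hbip : IsBipartition G A) (hx : 1 ≤ x) :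
    ((Fintype.card α : ℝ) ^ Fintype.card V)⁻¹ * ∑ t : V → α, ∏ v, localWeight G A x t v ≤
      permTutte G A x 0 := by
  have hα : (0 : ℝ) < (Fintype.card α : ℝ) ^ Fintype.card V := by positivity
  have hV : (0 : ℝ) < (Fintype.card V).factorial := by positivity
  rw [permTutte_zero_right, inv_mul_le_iff₀ hα, mul_left_comm, le_inv_mul_iff₀ hV]
  exact factorial_mul_sum_le_of_forall_le _ _ fun t π h =>
    Finset.prod_le_prod (fun v _ => localWeight_nonneg (zero_le_one.trans hx) t v)
      fun v _ => localWeight_le_localWeight hbip hx (fun u _ v _ => h u v) v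

end LocalWeight

section TwistedMonotone

variable {V α : Type*} {A : Set V}

/-- The function `f` of a labelling does not decrease when labels are raised on `A` and lowered
off `A`. -/
def IsTwistedMonotone [LE α] (A : Set V) (f : (V → α) → ℝ) : Prop :=
  ∀ ⦃t t' : V → α⦄, (∀ v ∈ A, t v ≤ t' v) → (∀ v ∉ A, t' v ≤ t v) → f t ≤ f t'

lemma IsTwistedMonotone.mul [LE α] {f g : (V → α) → ℝ} (hf : IsTwistedMonotone A f)
    (hg : IsTwistedMonotone A g) (hf₀ : 0 ≤ f) (hg₀ : 0 ≤ g) : IsTwistedMonotone A (f * g) :=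
  fun _ t' hA hAc => mul_le_mul (hf hA hAc) (hg hA hAc) (hg₀ _) (hf₀ t')

lemma IsTwistedMonotone.prod [LE α] {ι : Type*} {f : ι → (V → α) → ℝ} (S : Finset ι)
    (hf : ∀ i, IsTwistedMonotone A (f i)) (hf₀ : ∀ i, 0 ≤ f i) :
    IsTwistedMonotone A (fun t => ∏ i ∈ S, f i t) :=
  fun t _ hA hAc => Finset.prod_le_prod (fun i _ => hf₀ i t) fun i _ => hf i hA hAc

lemma isTwistedMonotone_localWeight [Preorder α] {G : SimpleGraph V} (hbip : IsBipartition G A)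
    {x : ℝ} (hx : 1 ≤ x) (v : V) :
    IsTwistedMonotone A (fun t : V → α => localWeight G A x t v) :=
  fun _ _ hA hAc => localWeight_le_localWeight hbip hx
    (fun u hu w hw huw => (hAc u hu).trans_lt (huw.trans_le (hA w hw))) v

/-- Reversal of the labels off `A`; it turns twisted monotone functions into monotone ones. -/
noncomputable def reverseOff {N : ℕ} (A : Set V) : (V → Fin N) ≃ (V → Fin N) :=
  Equiv.piCongrRight fun v => if v ∈ A then Equiv.refl _ else Fin.revPerm

lemma reverseOff_apply {N : ℕ} (t : V → Fin N) (v : V) :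
    reverseOff A t v = if v ∈ A then t v else (t v).rev := by
  by_cases hv : v ∈ A <;> simp [reverseOff, hv]

lemma IsTwistedMonotone.monotone_comp_reverseOff {N : ℕ} {f : (V → Fin N) → ℝ}
    (hf : IsTwistedMonotone A f) : Monotone (f ∘ reverseOff A) := fun t t' htt' =>
  hf (fun v hv => by simpa only [reverseOff_apply, if_pos hv] using htt' v)
    (fun v hv => by simpa only [reverseOff_apply, if_neg hv, Fin.rev_le_rev] using htt' v)

end TwistedMonotone

section ProdExpect

variable {V α : Type*} [Fintype V] [DecidableEq V] [Fintype α] {p : V → α → ℝ}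

/-- The expectation of `f` when the labels of the vertices are independent and the label of `v`
has probability mass function `p v`. -/
def prodExpect (p : V → α → ℝ) (f : (V → α) → ℝ) : ℝ :=
  ∑ t, (∏ v, p v (t v)) * f t

lemma prodExpect_one (hp₁ : ∀ v, ∑ s, p v s = 1) : prodExpect p (fun _ => 1) = 1 := by
  simp only [prodExpect, mul_one]
  rw [← Fintype.prod_sum]
  exact Finset.prod_eq_one fun v _ => hp₁ v

lemma prodExpect_nonneg (hp₀ : ∀ v s, 0 ≤ p v s) {f : (V → α) → ℝ} (hf₀ : 0 ≤ f) :
    0 ≤ prodExpect p f :=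
  Finset.sum_nonneg fun t _ => mul_nonneg (Finset.prod_nonneg fun v _ => hp₀ v (t v)) (hf₀ t)

/-- Given the label of `v`, the labels of the other vertices are independent. -/
lemma prodExpect_prod_of_notMem (hp₁ : ∀ v, ∑ s, p v s = 1) {v : V} {S : Finset V} (hvS : v ∉ S)
    (g : α → α → ℝ) :
    prodExpect p (fun t => ∏ w ∈ S, g (t w) (t v)) =
      ∑ s, p v s * ∏ w ∈ S, ∑ r, p w r * g r s := by
  let q (s : α) (w : V) (r : α) : ℝ :=
    p w r * ((if w = v then if r = s then 1 else 0 else 1) * (if w ∈ S then g r s else 1))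
  have hq_prod : ∀ s (t : V → α), ∏ w, q s w (t w) =
      if t v = s then (∏ w, p w (t w)) * ∏ w ∈ S, g (t w) (t v) else 0 := by
    intro s t
    simp only [q, Finset.prod_mul_distrib, Finset.prod_ite_eq', Finset.prod_ite_mem,
      Finset.mem_univ, if_true, Finset.univ_inter]
    split_ifs with hs
    · rw [hs, one_mul]
    · rw [zero_mul, mul_zero]
  have hq_sum : ∀ s w, ∑ r, q s w r =
      (if w = v then p v s else 1) * (if w ∈ S then ∑ r, p w r * g r s else 1) := by
    intro s w
    by_cases hwv : w = v
    · subst hwv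
      simp [q, hvS]
    · by_cases hwS : w ∈ S <;> simp [q, hwv, hwS, hp₁]
  calc prodExpect p (fun t => ∏ w ∈ S, g (t w) (t v))
      = ∑ t : V → α, ∑ s, ∏ w, q s w (t w) := by
        simp only [prodExpect, hq_prod, Finset.sum_ite_eq, Finset.mem_univ, if_true]
    _ = ∑ s, ∏ w, ∑ r, q s w r := by
        rw [Finset.sum_comm]
        exact Finset.sum_congr rfl fun s _ => (Fintype.prod_sum _).symm
    _ = ∑ s, p v s * ∏ w ∈ S, ∑ r, p w r * g r s := by
        simp only [hq_sum, Finset.prod_mul_distrib, Finset.prod_ite_eq', Finset.prod_ite_mem,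
          Finset.mem_univ, if_true, Finset.univ_inter]

end ProdExpect

section Harris

lemma prod_apply_mul_prod_apply_eq_inf_sup {V α : Type*} [Fintype V] [LinearOrder α]
    (p : V → α → ℝ) (t t' : V → α) :
    (∏ v, p v (t v)) * ∏ v, p v (t' v) = (∏ v, p v ((t ⊓ t') v)) * ∏ v, p v ((t ⊔ t') v) := by
  simp only [← Finset.prod_mul_distrib, Pi.inf_apply, Pi.sup_apply]
  refine Finset.prod_congr rfl fun v _ => ?_
  rcases le_total (t v) (t' v) with h | h
  · rw [inf_eq_left.2 h, sup_eq_right.2 h]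
  · rw [inf_eq_right.2 h, sup_eq_left.2 h, mul_comm]

variable {V : Type*} [Fintype V] [DecidableEq V] {N : ℕ} {p : V → Fin N → ℝ} {A : Set V}

lemma prodExpect_comp_reverseOff (f : (V → Fin N) → ℝ) :
    prodExpect (fun v s => p v (if v ∈ A then s else s.rev)) (f ∘ reverseOff A) =
      prodExpect p f := by
  simp only [prodExpect, Function.comp_apply, ← reverseOff_apply]
  exact Equiv.sum_comp (reverseOff A) fun t => (∏ v, p v (t v)) * f t

lemma prodExpect_mul_prodExpect_le (hp₀ : ∀ v s, 0 ≤ p v s) (hp₁ : ∀ v, ∑ s, p v s = 1)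
    {f g : (V → Fin N) → ℝ} (hf : IsTwistedMonotone A f) (hg : IsTwistedMonotone A g)
    (hf₀ : 0 ≤ f) (hg₀ : 0 ≤ g) :
    prodExpect p f * prodExpect p g ≤ prodExpect p (f * g) := by
  let q : V → Fin N → ℝ := fun v s => p v (if v ∈ A then s else s.rev)
  have hmass : ∑ t : V → Fin N, ∏ v, q v (t v) = 1 := by
    have h := (prodExpect_comp_reverseOff (p := p) (A := A) fun _ => 1).trans (prodExpect_one hp₁)
    simpa only [prodExpect, Function.comp_def, mul_one] using h
  have hfkg := fkg (μ := fun t => ∏ v, q v (t v)) (f := f ∘ reverseOff A)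
    (g := g ∘ reverseOff A) (fun t => Finset.prod_nonneg fun v _ => hp₀ v _)
    (fun t => hf₀ (reverseOff A t)) (fun t => hg₀ (reverseOff A t))
    hf.monotone_comp_reverseOff hg.monotone_comp_reverseOff
    fun t t' => (prod_apply_mul_prod_apply_eq_inf_sup q t t').le
  rw [hmass, one_mul] at hfkg
  rw [← prodExpect_comp_reverseOff (A := A) f, ← prodExpect_comp_reverseOff (A := A) g,
    ← prodExpect_comp_reverseOff (A := A) (f * g)]
  exact hfkg

lemma prod_prodExpect_le_prodExpect_prod {ι : Type*} (hp₀ : ∀ v s, 0 ≤ p v s)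
    (hp₁ : ∀ v, ∑ s, p v s = 1) {f : ι → (V → Fin N) → ℝ} (hf : ∀ i, IsTwistedMonotone A (f i))
    (hf₀ : ∀ i, 0 ≤ f i) (S : Finset ι) :
    ∏ i ∈ S, prodExpect p (f i) ≤ prodExpect p (fun t => ∏ i ∈ S, f i t) := by
  induction S using Finset.induction_on with
  | empty => simp only [Finset.prod_empty, prodExpect_one hp₁, le_refl]
  | insert i S hiS ih =>
    simp only [Finset.prod_insert hiS]
    calc prodExpect p (f i) * ∏ j ∈ S, prodExpect p (f j)
        ≤ prodExpect p (f i) * prodExpect p (fun t => ∏ j ∈ S, f j t) :=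
          mul_le_mul_of_nonneg_left ih (prodExpect_nonneg hp₀ (hf₀ i))
      _ ≤ prodExpect p (fun t => f i t * ∏ j ∈ S, f j t) :=
          prodExpect_mul_prodExpect_le hp₀ hp₁ (hf i) (.prod S hf hf₀) (hf₀ i)
            fun t => Finset.prod_nonneg fun j _ => hf₀ j t

end Harris

section Block

variable {V α : Type*} [Fintype V] {G : SimpleGraph V} {A L : Set V} {x : ℝ} {v : V}

/-- The joint contribution of the core vertex `v` and of its pendant neighbours. -/
noncomputable def blockWeight [LT α] (G : SimpleGraph V) (A L : Set V) (x : ℝ) (v : V)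
    (t : V → α) : ℝ :=
  localWeight G A x t v * ∏ l ∈ pendantNeighbors G L v, localWeight G A x t l

lemma blockWeight_nonneg [LT α] (hx : 0 ≤ x) :
    0 ≤ (blockWeight G A L x v : (V → α) → ℝ) := fun t =>
  mul_nonneg (localWeight_nonneg hx t v) (Finset.prod_nonneg fun l _ => localWeight_nonneg hx t l)

lemma isTwistedMonotone_blockWeight [Preorder α] (hbip : IsBipartition G A) (hx : 1 ≤ x) :
    IsTwistedMonotone A (blockWeight G A L x v : (V → α) → ℝ) :=
  have hnonneg : ∀ w (t : V → α), 0 ≤ localWeight G A x t w := fun w t =>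
    localWeight_nonneg (zero_le_one.trans hx) t w
  (isTwistedMonotone_localWeight hbip hx v).mul
    (.prod _ (isTwistedMonotone_localWeight hbip hx) hnonneg) (hnonneg v)
    fun t => Finset.prod_nonneg fun l _ => hnonneg l t

lemma prod_blockWeight [LT α] (hL : IsPendantSet G L) (t : V → α) :
    ∏ v with v ∉ L, blockWeight G A L x v t = ∏ v, localWeight G A x t v := by
  choose! c hcL hc using hL
  have hfiber : ∀ v, pendantNeighbors G L v = {l ∈ ({l | l ∈ L} : Finset V) | c l = v} := by
    intro v
    ext l
    simp only [mem_pendantNeighbors, Finset.mem_filter, Finset.mem_univ, true_and]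
    exact ⟨fun ⟨hvl, hl⟩ => ⟨hl, ((hc l hl v).1 hvl.symm).symm⟩,
      fun ⟨hl, hlv⟩ => ⟨((hc l hl v).2 hlv.symm).symm, hl⟩⟩
  have hmaps : ∀ l ∈ ({l | l ∈ L} : Finset V), c l ∈ ({v | v ∉ L} : Finset V) := fun l hl =>
    Finset.mem_filter.2 ⟨Finset.mem_univ _, hcL l (Finset.mem_filter.1 hl).2⟩
  simp only [blockWeight, Finset.prod_mul_distrib, hfiber]
  rw [Finset.prod_fiberwise_of_maps_to hmaps, mul_comm, Finset.prod_filter_mul_prod_filter_not]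

lemma prod_neighborFinset (L : Set V) (f : V → ℝ) :
    ∏ w ∈ G.neighborFinset v, f w =
      (∏ w ∈ pendantNeighbors G L v, f w) * ∏ w ∈ coreNeighbors G L v, f w :=
  (Finset.prod_filter_mul_prod_filter_not _ _ _).symm

lemma card_pendantNeighbors_add_card_coreNeighbors :
    (pendantNeighbors G L v).card + (coreNeighbors G L v).card = (G.neighborFinset v).card :=
  Finset.card_filter_add_card_filter_not _

variable [LinearOrder α]

lemma localWeight_of_mem_pendantNeighbors (hL : IsPendantSet G L) {l : V}
    (hl : l ∈ pendantNeighbors G L v) (t : V → α) :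
    localWeight G A x t l =
      if l ∈ A then if t v < t l then x else 1 else if t l < t v then 1 else 0 := by
  obtain ⟨hvl, hlL⟩ := mem_pendantNeighbors.1 hl
  obtain ⟨c, -, hc⟩ := hL l hlL
  obtain rfl : v = c := (hc v).1 hvl.symm
  simp [localWeight, hc]

lemma blockWeight_of_mem (hbip : IsBipartition G A) (hL : IsPendantSet G L) (hv : v ∈ A)
    (t : V → α) :
    blockWeight G A L x v t =
      ∏ w ∈ pendantNeighbors G L v, (if t w < t v then 1 else 0) +
        (x - 1) * ∏ w ∈ G.neighborFinset v, (if t w < t v then 1 else 0) := by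
  have hpendant : ∀ l ∈ pendantNeighbors G L v,
      localWeight G A x t l = if t l < t v then 1 else 0 := fun l hl => by
    rw [localWeight_of_mem_pendantNeighbors hL hl,
      if_neg ((hbip v l (mem_pendantNeighbors.1 hl).1).1 hv)]
  rw [blockWeight, Finset.prod_congr rfl hpendant]
  simp only [Finset.prod_ite_zero, Finset.prod_const_one, localWeight, if_pos hv,
    SimpleGraph.mem_neighborFinset]
  by_cases htop : ∀ w, G.Adj v w → t w < t v
  · rw [if_pos htop, if_pos htop,
      if_pos fun w hw => htop w (mem_pendantNeighbors.1 hw).1]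
    ring
  · rw [if_neg htop, if_neg htop]
    ring

lemma blockWeight_of_notMem (hbip : IsBipartition G A) (hL : IsPendantSet G L) (hv : v ∉ A)
    (t : V → α) :
    blockWeight G A L x v t =
      ∏ w ∈ pendantNeighbors G L v, (if t v < t w then x else 1) -
        ∏ w ∈ G.neighborFinset v, (if t w ≤ t v then 1 else 0) := by
  have hpendant : ∀ l ∈ pendantNeighbors G L v,
      localWeight G A x t l = if t v < t l then x else 1 := fun l hl => by
    rw [localWeight_of_mem_pendantNeighbors hL hl,
      if_pos (not_not.1 (mt (hbip v l (mem_pendantNeighbors.1 hl).1).2 hv))]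
  rw [blockWeight, Finset.prod_congr rfl hpendant]
  simp only [Finset.prod_ite_zero, Finset.prod_const_one, localWeight, if_neg hv,
    SimpleGraph.mem_neighborFinset]
  by_cases htop : ∀ w, G.Adj v w → t w ≤ t v
  · rw [if_neg fun ⟨w, hvw, hlt⟩ => hlt.not_ge (htop w hvw), if_pos htop,
      Finset.prod_eq_one fun w hw => if_neg (htop w (mem_pendantNeighbors.1 hw).1).not_gt]
    ring
  · rw [if_neg htop, if_pos (by simpa only [not_forall, not_le, exists_prop] using htop)]
    ring

variable [DecidableEq V] [Fintype α] {p : V → α → ℝ}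

lemma prodExpect_blockWeight_of_mem (hbip : IsBipartition G A) (hL : IsPendantSet G L)
    (hv : v ∈ A) (hp₁ : ∀ v, ∑ s, p v s = 1) :
    prodExpect p (blockWeight G A L x v) =
      ∑ s, p v s * ((∏ w ∈ pendantNeighbors G L v, ∑ r, p w r * (if r < s then 1 else 0)) *
        (1 + (x - 1) *
          ∏ w ∈ coreNeighbors G L v, ∑ r, p w r * (if r < s then 1 else 0))) := by
  have hexpect : ∀ S : Finset V, v ∉ S →
      ∑ t : V → α, (∏ w, p w (t w)) * ∏ w ∈ S, (if t w < t v then 1 else 0) =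
        ∑ s, p v s * ∏ w ∈ S, ∑ r, p w r * (if r < s then 1 else 0) := fun S hvS =>
    prodExpect_prod_of_notMem hp₁ hvS fun r s => if r < s then 1 else 0
  simp only [prodExpect, blockWeight_of_mem hbip hL hv, mul_add, Finset.sum_add_distrib,
    mul_left_comm _ (x - 1), ← Finset.mul_sum, mul_one]
  rw [hexpect _ (by simp [pendantNeighbors]), hexpect _ (by simp)]
  simp only [prod_neighborFinset L]

lemma prodExpect_blockWeight_of_notMem (hbip : IsBipartition G A) (hL : IsPendantSet G L)
    (hv : v ∉ A) (hp₁ : ∀ v, ∑ s, p v s = 1) :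
    prodExpect p (blockWeight G A L x v) =
      ∑ s, p v s * (∏ w ∈ pendantNeighbors G L v, ∑ r, p w r * (if s < r then x else 1) -
        ∏ w ∈ G.neighborFinset v, ∑ r, p w r * (if r ≤ s then 1 else 0)) := by
  have hpendant := prodExpect_prod_of_notMem hp₁ (v := v) (S := pendantNeighbors G L v)
    (by simp [pendantNeighbors]) fun r s => if s < r then x else 1
  have hneighbor := prodExpect_prod_of_notMem hp₁ (v := v) (S := G.neighborFinset v)
    (by simp) fun r s => if r ≤ s then 1 else 0
  simp only [prodExpect] at hpendant hneighbor
  simp only [prodExpect, blockWeight_of_notMem hbip hL hv, mul_sub, Finset.sum_sub_distrib,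
    hpendant, hneighbor]

end Block

section LabelDist

variable {N m n : ℕ}

/-- The uniform probability mass function on the labels less than `n`. -/
noncomputable def uniformBelow (n : ℕ) (s : Fin N) : ℝ :=
  if (s : ℕ) < n then (n : ℝ)⁻¹ else 0

lemma sum_uniformBelow_mul (hnN : n ≤ N) (f : ℕ → ℝ) :
    ∑ s : Fin N, uniformBelow n s * f s = (∑ s ∈ Finset.range n, f s) / n := by
  unfold uniformBelow
  rw [Fin.sum_univ_eq_sum_range (fun s => (if s < n then (n : ℝ)⁻¹ else 0) * f s), div_eq_inv_mul,
    Finset.mul_sum]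
  refine (Finset.sum_subset_zero_on_sdiff (Finset.range_mono hnN) (fun s hs => ?_)
    fun s hs => ?_).symm
  · rw [if_neg (by simpa using (Finset.mem_sdiff.1 hs).2), zero_mul]
  · rw [if_pos (Finset.mem_range.1 hs)]

lemma sum_uniformBelow (hn : n ≠ 0) (hnN : n ≤ N) : ∑ s : Fin N, uniformBelow n s = 1 := by
  have h := sum_uniformBelow_mul hnN fun _ => 1
  simpa [hn] using h

lemma sum_uniformBelow_mul_ite_lt (hnN : n ≤ N) (s : Fin N) :
    ∑ r : Fin N, uniformBelow n r * (if r < s then 1 else 0) = (min s n : ℕ) / n := by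
  refine (sum_uniformBelow_mul hnN fun r => if r < (s : ℕ) then 1 else 0).trans ?_
  have hfilter : {r ∈ Finset.range n | r < (s : ℕ)} = Finset.range (min s n) := by
    ext r
    simp only [Finset.mem_filter, Finset.mem_range]
    omega
  rw [← Finset.sum_filter, hfilter, Finset.sum_const, nsmul_one, Finset.card_range]

lemma sum_uniformBelow_mul_ite_le (s : Fin N) :
    ∑ r : Fin N, uniformBelow N r * (if r ≤ s then 1 else 0) = ((s : ℝ) + 1) / N := by
  refine (sum_uniformBelow_mul le_rfl fun r => if r ≤ (s : ℕ) then 1 else 0).trans ?_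
  have hfilter : {r ∈ Finset.range N | r ≤ (s : ℕ)} = Finset.range (s + 1) := by
    ext r
    simp only [Finset.mem_filter, Finset.mem_range]
    omega
  rw [← Finset.sum_filter, hfilter, Finset.sum_const, nsmul_one, Finset.card_range, Nat.cast_succ]

lemma sum_uniformBelow_mul_ite_gt (x : ℝ) (s : Fin N) :
    ∑ r : Fin N, uniformBelow N r * (if s < r then x else 1) =
      x - (x - 1) * (((s : ℝ) + 1) / N) := by
  have hite : ∀ r : Fin N, (if s < r then x else 1) = x - (x - 1) * (if r ≤ s then 1 else 0) := by
    intro r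
    by_cases hrs : r ≤ s
    · rw [if_neg hrs.not_gt, if_pos hrs]
      ring
    · rw [if_pos (not_le.1 hrs), if_neg hrs]
      ring
  have hN : N ≠ 0 := s.pos.ne'
  calc ∑ r : Fin N, uniformBelow N r * (if s < r then x else 1)
      = (∑ r : Fin N, uniformBelow N r) * x -
          (x - 1) * ∑ r : Fin N, uniformBelow N r * (if r ≤ s then 1 else 0) := by
        rw [Finset.sum_mul, Finset.mul_sum, ← Finset.sum_sub_distrib]
        exact Finset.sum_congr rfl fun r _ => by rw [hite]; ring
    _ = x - (x - 1) * (((s : ℝ) + 1) / N) := by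
        rw [sum_uniformBelow hN le_rfl, sum_uniformBelow_mul_ite_le, one_mul]

end LabelDist

section LowerBound

variable {V : Type*} {G : SimpleGraph V} {A L : Set V} {x : ℝ} {N m : ℕ} {v : V}

/-- The number of labels available to `v`: a core vertex outside `A` only receives one of the
`m` smallest of the `N` labels. -/
noncomputable def labelBound (N m : ℕ) (A L : Set V) (v : V) : ℕ :=
  if v ∈ A ∨ v ∈ L then N else m

/-- The uniform distribution of the label of `v` on the labels available to `v`. -/
noncomputable def labelDist (N m : ℕ) (A L : Set V) (v : V) : Fin N → ℝ :=
  uniformBelow (labelBound N m A L v)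

lemma labelBound_le (hmN : m ≤ N) : labelBound N m A L v ≤ N := by
  unfold labelBound
  split_ifs
  exacts [le_rfl, hmN]

lemma labelBound_ne_zero (hm : m ≠ 0) (hmN : m ≤ N) : labelBound N m A L v ≠ 0 := by
  unfold labelBound
  split_ifs <;> omega

lemma labelDist_nonneg (s : Fin N) : 0 ≤ labelDist N m A L v s := by
  unfold labelDist uniformBelow
  split_ifs <;> positivity

lemma sum_labelDist (hm : m ≠ 0) (hmN : m ≤ N) : ∑ s, labelDist N m A L v s = 1 :=
  sum_uniformBelow (labelBound_ne_zero hm hmN) (labelBound_le hmN)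

lemma labelBound_div_mul_labelDist_le (s : Fin N) :
    labelBound N m A L v / N * labelDist N m A L v s ≤ (N : ℝ)⁻¹ := by
  unfold labelDist uniformBelow
  split_ifs with hs
  · have hpos : (labelBound N m A L v : ℝ) ≠ 0 := by
      exact_mod_cast (Nat.zero_le _).trans_lt hs |>.ne'
    rw [div_mul_eq_mul_div, mul_inv_cancel₀ hpos, one_div]
  · rw [mul_zero]
    positivity

lemma prod_labelBound_div_eq [Fintype V] [NeZero N] :
    ∏ v with v ∉ L, (labelBound N m A L v / N : ℝ) = ∏ v, (labelBound N m A L v / N : ℝ) := by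
  refine Finset.prod_subset (Finset.filter_subset _ _) fun v _ hv => ?_
  have hvL : v ∈ L := by simpa using hv
  rw [labelBound, if_pos (Or.inr hvL), div_self (NeZero.ne (N : ℝ))]

lemma prod_labelBound_div_mul_prod_labelDist_le [Fintype V] (t : V → Fin N) :
    (∏ v, (labelBound N m A L v / N : ℝ)) * ∏ v, labelDist N m A L v (t v) ≤
      ((Fintype.card (Fin N) : ℝ) ^ Fintype.card V)⁻¹ := by
  rw [← Finset.prod_mul_distrib, Fintype.card_fin, ← inv_pow, ← Finset.card_univ,
    ← Finset.prod_const]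
  exact Finset.prod_le_prod (fun v _ => mul_nonneg (by positivity) (labelDist_nonneg _))
    fun v _ => labelBound_div_mul_labelDist_le _

/-- The expected block weight of a core vertex of `A` with `k` pendant and `D` core neighbours. -/
noncomputable def internalFactor (N m : ℕ) (x : ℝ) (k D : ℕ) : ℝ :=
  (∑ s ∈ Finset.range N, ((s : ℝ) / N) ^ k * (1 + (x - 1) * ((min s m : ℕ) / m) ^ D)) / N

/-- The expected block weight of a core vertex outside `A` with `k` pendant and `D` core
neighbours, times the probability `m / N` that a uniformly random label is available to it. -/
noncomputable def externalFactor (N m : ℕ) (x : ℝ) (k D : ℕ) : ℝ :=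
  (∑ s ∈ Finset.range m,
    ((x - (x - 1) * (((s : ℝ) + 1) / N)) ^ k - (((s : ℝ) + 1) / N) ^ (k + D))) / N

/-- The factor by which the core vertex `v` contributes to the lower bound for
`permTutte G A x 0`. -/
noncomputable def coreFactor [Fintype V] (N m : ℕ) (G : SimpleGraph V) (A L : Set V) (x : ℝ)
    (v : V) : ℝ :=
  if v ∈ A then internalFactor N m x (pendantNeighbors G L v).card (coreNeighbors G L v).card
  else externalFactor N m x (pendantNeighbors G L v).card (coreNeighbors G L v).card

lemma coreFactor_mul_coreFactor_compl [Fintype V] :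
    coreFactor N m G A L x v * coreFactor N m G Aᶜ L x v =
      internalFactor N m x (pendantNeighbors G L v).card (coreNeighbors G L v).card *
        externalFactor N m x (pendantNeighbors G L v).card (coreNeighbors G L v).card := by
  by_cases hv : v ∈ A
  · simp only [coreFactor, hv, Set.mem_compl_iff, not_true, if_true, if_false]
  · simp only [coreFactor, hv, Set.mem_compl_iff, not_false_eq_true, if_true, if_false, mul_comm]

variable [Fintype V] [DecidableEq V]

lemma prodExpect_labelDist_blockWeight_of_mem (hbip : IsBipartition G A) (hL : IsPendantSet G L)
    (hm : m ≠ 0) (hmN : m ≤ N) (hv : v ∈ A) :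
    prodExpect (labelDist N m A L) (blockWeight G A L x v) =
      internalFactor N m x (pendantNeighbors G L v).card (coreNeighbors G L v).card := by
  have hpendant : ∀ s, ∏ w ∈ pendantNeighbors G L v,
      ∑ r, labelDist N m A L w r * (if r < s then 1 else 0) =
        ((s : ℝ) / N) ^ (pendantNeighbors G L v).card := fun s =>
    Finset.prod_eq_pow_card fun w hw => by
      rw [labelDist, labelBound, if_pos (Or.inr (mem_pendantNeighbors.1 hw).2),
        sum_uniformBelow_mul_ite_lt le_rfl, min_eq_left s.is_lt.le]
  have hcore : ∀ s, ∏ w ∈ coreNeighbors G L v,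
      ∑ r, labelDist N m A L w r * (if r < s then 1 else 0) =
        ((min s m : ℕ) / m : ℝ) ^ (coreNeighbors G L v).card := fun s =>
    Finset.prod_eq_pow_card fun w hw => by
      obtain ⟨hvw, hwL⟩ := mem_coreNeighbors.1 hw
      rw [labelDist, labelBound, if_neg (not_or.2 ⟨(hbip v w hvw).1 hv, hwL⟩),
        sum_uniformBelow_mul_ite_lt hmN]
  rw [prodExpect_blockWeight_of_mem hbip hL hv fun _ => sum_labelDist hm hmN]
  simp only [hpendant, hcore]
  rw [labelDist, labelBound, if_pos (Or.inl hv)]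
  exact sum_uniformBelow_mul le_rfl fun s => ((s : ℝ) / N) ^ (pendantNeighbors G L v).card *
    (1 + (x - 1) * ((min s m : ℕ) / m) ^ (coreNeighbors G L v).card)

lemma div_mul_prodExpect_labelDist_blockWeight_of_notMem (hbip : IsBipartition G A)
    (hL : IsPendantSet G L) (hm : m ≠ 0) (hmN : m ≤ N) (hvA : v ∉ A) (hvL : v ∉ L) :
    m / N * prodExpect (labelDist N m A L) (blockWeight G A L x v) =
      externalFactor N m x (pendantNeighbors G L v).card (coreNeighbors G L v).card := by
  have hpendant : ∀ s, ∏ w ∈ pendantNeighbors G L v,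
      ∑ r, labelDist N m A L w r * (if s < r then x else 1) =
        (x - (x - 1) * (((s : ℝ) + 1) / N)) ^ (pendantNeighbors G L v).card := fun s =>
    Finset.prod_eq_pow_card fun w hw => by
      rw [labelDist, labelBound, if_pos (Or.inr (mem_pendantNeighbors.1 hw).2),
        sum_uniformBelow_mul_ite_gt]
  have hneighbor : ∀ s, ∏ w ∈ G.neighborFinset v,
      ∑ r, labelDist N m A L w r * (if r ≤ s then 1 else 0) =
        (((s : ℝ) + 1) / N) ^
          ((pendantNeighbors G L v).card + (coreNeighbors G L v).card) := fun s => by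
    rw [card_pendantNeighbors_add_card_coreNeighbors]
    refine Finset.prod_eq_pow_card fun w hw => ?_
    have hwA : w ∈ A := not_not.1 (mt (hbip v w ((G.mem_neighborFinset v w).1 hw)).2 hvA)
    rw [labelDist, labelBound, if_pos (Or.inl hwA), sum_uniformBelow_mul_ite_le]
  rw [prodExpect_blockWeight_of_notMem hbip hL hvA fun _ => sum_labelDist hm hmN]
  simp only [hpendant, hneighbor]
  rw [labelDist, labelBound, if_neg (not_or.2 ⟨hvA, hvL⟩), sum_uniformBelow_mul hmN fun s =>
    (x - (x - 1) * (((s : ℝ) + 1) / N)) ^ (pendantNeighbors G L v).card - (((s : ℝ) + 1) / N) ^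
      ((pendantNeighbors G L v).card + (coreNeighbors G L v).card)]
  rw [externalFactor, div_mul_div_comm, mul_comm, mul_div_mul_right _ _ (Nat.cast_ne_zero.2 hm)]

lemma labelBound_div_mul_prodExpect_blockWeight (hbip : IsBipartition G A)
    (hL : IsPendantSet G L) (hm : m ≠ 0) (hmN : m ≤ N) (hvL : v ∉ L) :
    labelBound N m A L v / N * prodExpect (labelDist N m A L) (blockWeight G A L x v) =
      coreFactor N m G A L x v := by
  have hN : (N : ℝ) ≠ 0 := Nat.cast_ne_zero.2 ((Nat.pos_of_ne_zero hm).trans_le hmN).ne'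
  by_cases hvA : v ∈ A
  · rw [coreFactor, if_pos hvA, labelBound, if_pos (Or.inl hvA), div_self hN, one_mul,
      prodExpect_labelDist_blockWeight_of_mem hbip hL hm hmN hvA]
  · rw [coreFactor, if_neg hvA, labelBound, if_neg (not_or.2 ⟨hvA, hvL⟩),
      div_mul_prodExpect_labelDist_blockWeight_of_notMem hbip hL hm hmN hvA hvL]

/-- Conditioning the labels of the core vertices outside `A` costs the product of the
probabilities `labelBound v / N`; the conditioned block weights obey Harris' inequality. -/
lemma prod_coreFactor_le_permTutte (hbip : IsBipartition G A) (hL : IsPendantSet G L)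
    (hm : m ≠ 0) (hmN : m ≤ N) (hx : 1 ≤ x) :
    ∏ v with v ∉ L, coreFactor N m G A L x v ≤ permTutte G A x 0 := by
  have : NeZero N := ⟨((Nat.pos_of_ne_zero hm).trans_le hmN).ne'⟩
  let ρ (v : V) : ℝ := labelBound N m A L v / N
  calc ∏ v with v ∉ L, coreFactor N m G A L x v
      = (∏ v, ρ v) *
        ∏ v with v ∉ L, prodExpect (labelDist N m A L) (blockWeight G A L x v) := by
        rw [← prod_labelBound_div_eq, ← Finset.prod_mul_distrib]
        exact Finset.prod_congr rfl fun v hv =>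
          (labelBound_div_mul_prodExpect_blockWeight hbip hL hm hmN
            (Finset.mem_filter.1 hv).2).symm
    _ ≤ (∏ v, ρ v) * prodExpect (labelDist N m A L)
          (fun t => ∏ v with v ∉ L, blockWeight G A L x v t) :=
        mul_le_mul_of_nonneg_left
          (prod_prodExpect_le_prodExpect_prod (fun _ => labelDist_nonneg)
            (fun _ => sum_labelDist hm hmN) (fun _ => isTwistedMonotone_blockWeight hbip hx)
            (fun _ => blockWeight_nonneg (zero_le_one.trans hx)) _)
          (Finset.prod_nonneg fun v _ => by positivity)
    _ = ∑ t : V → Fin N, (∏ v, ρ v) * (∏ v, labelDist N m A L v (t v)) *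
          ∏ v, localWeight G A x t v := by
        simp only [prodExpect, prod_blockWeight hL, Finset.mul_sum, mul_assoc]
    _ ≤ ∑ t : V → Fin N, ((Fintype.card (Fin N) : ℝ) ^ Fintype.card V)⁻¹ *
          ∏ v, localWeight G A x t v :=
        Finset.sum_le_sum fun t _ => mul_le_mul_of_nonneg_right
          (prod_labelBound_div_mul_prod_labelDist_le t)
          (Finset.prod_nonneg fun v _ => localWeight_nonneg (zero_le_one.trans hx) t v)
    _ ≤ permTutte G A x 0 := by
        rw [← Finset.mul_sum]
        exact sum_prod_localWeight_le_permTutte hbip hx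

end LowerBound

section Factor

variable {N m k : ℕ} {x : ℝ}

/-- The limit of `internalFactor N m x k D` as `D` tends to infinity. -/
noncomputable def internalTail (N m : ℕ) (x : ℝ) (k : ℕ) : ℝ :=
  (∑ s ∈ Finset.range N, (if s < m then 1 else x) * ((s : ℝ) / N) ^ k) / N

lemma internalTail_nonneg (hx : 0 ≤ x) : 0 ≤ internalTail N m x k :=
  div_nonneg (Finset.sum_nonneg fun s _ => mul_nonneg (by split_ifs <;> positivity) (by positivity))
    (Nat.cast_nonneg N)

lemma internalTail_le_internalFactor (hm : m ≠ 0) (hx : 1 ≤ x) (D : ℕ) :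
    internalTail N m x k ≤ internalFactor N m x k D := by
  refine div_le_div_of_nonneg_right (Finset.sum_le_sum fun s _ => ?_) (Nat.cast_nonneg N)
  rw [mul_comm]
  refine mul_le_mul_of_nonneg_left ?_ (by positivity)
  split_ifs with hs
  · exact le_add_of_nonneg_right (mul_nonneg (sub_nonneg.2 hx) (by positivity))
  · rw [min_eq_right (not_lt.1 hs), div_self (Nat.cast_ne_zero.2 hm), one_pow, mul_one,
      add_sub_cancel]

lemma antitone_internalFactor (hx : 1 ≤ x) : Antitone (internalFactor N m x k) := by
  intro D D' hD
  have hpow : ∀ s : ℕ, ((min s m : ℕ) / m : ℝ) ^ D' ≤ ((min s m : ℕ) / m : ℝ) ^ D := fun s =>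
    pow_le_pow_of_le_one (by positivity)
      (div_le_one_of_le₀ (Nat.cast_le.2 (min_le_right s m)) (Nat.cast_nonneg m)) hD
  refine div_le_div_of_nonneg_right (Finset.sum_le_sum fun s _ => ?_) (Nat.cast_nonneg N)
  exact mul_le_mul_of_nonneg_left
    (add_le_add_right (mul_le_mul_of_nonneg_left (hpow s) (sub_nonneg.2 hx)) 1) (by positivity)

lemma internalFactor_nonneg (hx : 1 ≤ x) (D : ℕ) : 0 ≤ internalFactor N m x k D := by
  have := sub_nonneg.2 hx
  unfold internalFactor
  positivity

lemma monotone_externalFactor (hmN : m ≤ N) : Monotone (externalFactor N m x k) := by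
  intro D D' hD
  refine div_le_div_of_nonneg_right (Finset.sum_le_sum fun s hs => ?_) (Nat.cast_nonneg N)
  have hle : ((s : ℝ) + 1) / N ≤ 1 := div_le_one_of_le₀
    (by exact_mod_cast (Finset.mem_range.1 hs).trans_le hmN) (Nat.cast_nonneg N)
  exact sub_le_sub_left
    (pow_le_pow_of_le_one (by positivity) hle (Nat.add_le_add_left hD k)) _

lemma externalFactor_nonneg (hmN : m ≤ N) (hx : 1 ≤ x) (D : ℕ) :
    0 ≤ externalFactor N m x k D := by
  refine div_nonneg (Finset.sum_nonneg fun s hs => ?_) (Nat.cast_nonneg N)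
  have hle : ((s : ℝ) + 1) / N ≤ 1 := div_le_one_of_le₀
    (by exact_mod_cast (Finset.mem_range.1 hs).trans_le hmN) (Nat.cast_nonneg N)
  have hone : 1 ≤ x - (x - 1) * (((s : ℝ) + 1) / N) := by nlinarith
  exact sub_nonneg.2 ((pow_le_one₀ (by positivity) hle).trans (one_le_pow₀ hone))

lemma coreFactor_nonneg {V : Type*} [Fintype V] {G : SimpleGraph V} {A L : Set V} {v : V}
    (hmN : m ≤ N) (hx : 1 ≤ x) : 0 ≤ coreFactor N m G A L x v := by
  unfold coreFactor
  split_ifs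
  exacts [internalFactor_nonneg hx _, externalFactor_nonneg hmN hx _]

/-- Log-convexity of moments: the ratio of consecutive moments does not decrease. -/
lemma mul_moment_le_moment {ι : Type*} {S : Finset ι} {w z : ι → ℝ} (hw : ∀ i ∈ S, 0 ≤ w i)
    (hz : ∀ i ∈ S, 0 ≤ z i) {c : ℝ} (hc : 0 ≤ c)
    (h : c * ∑ i ∈ S, w i * z i ^ k ≤ ∑ i ∈ S, w i * z i ^ (k + 1)) :
    c * ∑ i ∈ S, w i * z i ^ (k + 1) ≤ ∑ i ∈ S, w i * z i ^ (k + 2) := by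
  have hsq : 0 ≤ ∑ i ∈ S, w i * z i ^ k * (z i - c) ^ 2 := Finset.sum_nonneg fun i hi =>
    mul_nonneg (mul_nonneg (hw i hi) (pow_nonneg (hz i hi) k)) (sq_nonneg _)
  have hexpand : ∑ i ∈ S, w i * z i ^ k * (z i - c) ^ 2 =
      ∑ i ∈ S, w i * z i ^ (k + 2) - c * ∑ i ∈ S, w i * z i ^ (k + 1) -
        c * (∑ i ∈ S, w i * z i ^ (k + 1) - c * ∑ i ∈ S, w i * z i ^ k) := by
    simp only [Finset.mul_sum, ← Finset.sum_sub_distrib]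
    exact Finset.sum_congr rfl fun i _ => by ring
  linarith [mul_nonneg hc (sub_nonneg.2 h)]

lemma mul_internalTail_le_internalTail_add_one (hx : 0 ≤ x) {c : ℝ} (hc : 0 ≤ c) {k₀ : ℕ}
    (hk₀ : c * internalTail N m x k₀ ≤ internalTail N m x (k₀ + 1)) (hk : k₀ ≤ k) :
    c * internalTail N m x k ≤ internalTail N m x (k + 1) := by
  induction k, hk using Nat.le_induction with
  | base => exact hk₀
  | succ k _ ih =>
    rcases N.eq_zero_or_pos with rfl | hN
    · simp [internalTail]
    · have hN' : (0 : ℝ) < N := Nat.cast_pos.2 hN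
      unfold internalTail at ih ⊢
      rw [← mul_div_assoc, div_le_div_iff_of_pos_right hN'] at ih ⊢
      exact mul_moment_le_moment (fun s _ => by split_ifs <;> positivity)
        (fun s _ => by positivity) hc ih

lemma mul_externalFactor_zero_le (hmN : m ≤ N) (hx : 1 ≤ x) :
    (x - (x - 1) * (m / N)) * externalFactor N m x k 0 ≤ externalFactor N m x (k + 1) 0 := by
  unfold externalFactor
  rw [← mul_div_assoc, Finset.mul_sum]
  refine div_le_div_of_nonneg_right (Finset.sum_le_sum fun s hs => ?_) (Nat.cast_nonneg N)
  have hsm : ((s : ℝ) + 1) / N ≤ m / N :=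
    div_le_div_of_nonneg_right (by exact_mod_cast Finset.mem_range.1 hs) (Nat.cast_nonneg N)
  have hmN' : (m / N : ℝ) ≤ 1 := div_le_one_of_le₀ (Nat.cast_le.2 hmN) (Nat.cast_nonneg N)
  set y : ℝ := ((s : ℝ) + 1) / N
  set b : ℝ := x - (x - 1) * (m / N)
  have hb : 1 ≤ b := by nlinarith
  have hba : b ≤ x - (x - 1) * y := by nlinarith
  calc b * ((x - (x - 1) * y) ^ k - y ^ (k + 0))
      = b * (x - (x - 1) * y) ^ k - b * y ^ k := by ring
    _ ≤ (x - (x - 1) * y) * (x - (x - 1) * y) ^ k - y * y ^ k := by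
        have ha₀ : 0 ≤ x - (x - 1) * y := by linarith
        have hyb : y ≤ b := by linarith
        gcongr
    _ = (x - (x - 1) * y) ^ (k + 1) - y ^ (k + 1 + 0) := by ring

end Factor

section Numerics

variable {k D : ℕ}

lemma one_le_internalFactor_mul_externalFactor_of_mem_Icc {D₁ D₂ : ℕ} (hD : D ∈ Set.Icc D₁ D₂)
    (h : 1 ≤ internalFactor 32 24 (5 / 2) k D₂ * externalFactor 32 24 (5 / 2) k D₁) :
    1 ≤ internalFactor 32 24 (5 / 2) k D * externalFactor 32 24 (5 / 2) k D :=
  h.trans <| mul_le_mul (antitone_internalFactor (by norm_num) hD.2)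
    (monotone_externalFactor (by norm_num) hD.1)
    (externalFactor_nonneg (by norm_num) (by norm_num) D₁)
    (internalFactor_nonneg (by norm_num) D)

lemma one_le_internalFactor_mul_externalFactor_of_internalTail {D₁ : ℕ} (hD : D₁ ≤ D)
    (h : 1 ≤ internalTail 32 24 (5 / 2) k * externalFactor 32 24 (5 / 2) k D₁) :
    1 ≤ internalFactor 32 24 (5 / 2) k D * externalFactor 32 24 (5 / 2) k D :=
  h.trans <| mul_le_mul (internalTail_le_internalFactor (by norm_num) (by norm_num) D)
    (monotone_externalFactor (by norm_num) hD)
    (externalFactor_nonneg (by norm_num) (by norm_num) D₁)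
    (internalFactor_nonneg (by norm_num) D)

lemma one_le_internalTail_mul_externalFactor_zero (hk : 2 ≤ k) :
    1 ≤ internalTail 32 24 (5 / 2) k * externalFactor 32 24 (5 / 2) k 0 := by
  induction k, hk using Nat.le_induction with
  | base => norm_num [internalTail, externalFactor, Finset.sum_range_succ]
  | succ k hk ih =>
    -- `11 / 8 = x - (x - 1) * (m / N)` is the growth rate that `externalFactor` guarantees in `k`.
    have htail : 8 / 11 * internalTail 32 24 (5 / 2) k ≤ internalTail 32 24 (5 / 2) (k + 1) :=
      mul_internalTail_le_internalTail_add_one (by norm_num) (by norm_num)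
        (by norm_num [internalTail, Finset.sum_range_succ]) hk
    have hext : 11 / 8 * externalFactor 32 24 (5 / 2) k 0 ≤
        externalFactor 32 24 (5 / 2) (k + 1) 0 := by
      have h := mul_externalFactor_zero_le (N := 32) (m := 24) (x := 5 / 2) (k := k)
        (by norm_num) (by norm_num)
      rwa [show (5 / 2 : ℝ) - (5 / 2 - 1) * ((24 : ℕ) / (32 : ℕ)) = 11 / 8 by norm_num] at h
    calc (1 : ℝ) ≤ internalTail 32 24 (5 / 2) k * externalFactor 32 24 (5 / 2) k 0 := ih
      _ = 8 / 11 * internalTail 32 24 (5 / 2) k *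
            (11 / 8 * externalFactor 32 24 (5 / 2) k 0) := by ring
      _ ≤ internalTail 32 24 (5 / 2) (k + 1) * externalFactor 32 24 (5 / 2) (k + 1) 0 :=
          mul_le_mul htail hext
            (mul_nonneg (by norm_num) (externalFactor_nonneg (by norm_num) (by norm_num) 0))
            (internalTail_nonneg (by norm_num))

lemma one_le_internalFactor_mul_externalFactor (h : 0 < k ∨ 2 ≤ D) :
    1 ≤ internalFactor 32 24 (5 / 2) k D * externalFactor 32 24 (5 / 2) k D := by
  obtain rfl | rfl | hk : k = 0 ∨ k = 1 ∨ 2 ≤ k := by omega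
  · obtain hD | hD | hD : D ∈ Set.Icc 2 2 ∨ D ∈ Set.Icc 3 6 ∨ 7 ≤ D := by
      simp only [Set.mem_Icc]
      omega
    · refine one_le_internalFactor_mul_externalFactor_of_mem_Icc hD ?_
      norm_num [internalFactor, externalFactor, Finset.sum_range_succ]
    · refine one_le_internalFactor_mul_externalFactor_of_mem_Icc hD ?_
      norm_num [internalFactor, externalFactor, Finset.sum_range_succ]
    · refine one_le_internalFactor_mul_externalFactor_of_internalTail hD ?_
      norm_num [internalTail, externalFactor, Finset.sum_range_succ]
  · obtain rfl | hD : D = 0 ∨ 1 ≤ D := by omega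
    · norm_num [internalFactor, externalFactor, Finset.sum_range_succ]
    · refine one_le_internalFactor_mul_externalFactor_of_internalTail hD ?_
      norm_num [internalTail, externalFactor, Finset.sum_range_succ]
  · exact one_le_internalFactor_mul_externalFactor_of_internalTail D.zero_le
      (one_le_internalTail_mul_externalFactor_zero hk)

end Numerics

section Main

variable {V : Type*} [Fintype V] [DecidableEq V]

lemma permTutte_le_permTutte (G : SimpleGraph V) (A : Set V) {x x' y : ℝ} (hx : 0 ≤ x)
    (hxx' : x ≤ x') (hy : 0 ≤ y) : permTutte G A x y ≤ permTutte G A x' y := by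
  unfold permTutte
  gcongr

lemma permTutte_nonneg (G : SimpleGraph V) (A : Set V) {x y : ℝ} (hx : 0 ≤ x) (hy : 0 ≤ y) :
    0 ≤ permTutte G A x y := by
  unfold permTutte
  positivity

lemma one_le_permTutte_mul_permTutte_of_one_le_factor {G : SimpleGraph V} {A L : Set V} {N m : ℕ}
    {x : ℝ} (hbip : IsBipartition G A) (hL : IsPendantSet G L) (hm : m ≠ 0) (hmN : m ≤ N)
    (hx : 1 ≤ x)
    (hfactor : ∀ v ∉ L,
      1 ≤ internalFactor N m x (pendantNeighbors G L v).card (coreNeighbors G L v).card *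
        externalFactor N m x (pendantNeighbors G L v).card (coreNeighbors G L v).card) :
    1 ≤ permTutte G A x 0 * permTutte G A 0 x := by
  calc (1 : ℝ) ≤ ∏ v with v ∉ L, coreFactor N m G A L x v * coreFactor N m G Aᶜ L x v := by
        rw [← Finset.prod_const_one]
        refine Finset.prod_le_prod (fun _ _ => zero_le_one) fun v hv => ?_
        rw [coreFactor_mul_coreFactor_compl]
        exact hfactor v (Finset.mem_filter.1 hv).2
    _ = (∏ v with v ∉ L, coreFactor N m G A L x v) * ∏ v with v ∉ L, coreFactor N m G Aᶜ L x v :=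
        Finset.prod_mul_distrib
    _ ≤ permTutte G A x 0 * permTutte G Aᶜ x 0 :=
        mul_le_mul (prod_coreFactor_le_permTutte hbip hL hm hmN hx)
          (prod_coreFactor_le_permTutte hbip.compl_s16 hL hm hmN hx)
          (Finset.prod_nonneg fun v _ => coreFactor_nonneg hmN hx)
          (permTutte_nonneg G A (zero_le_one.trans hx) le_rfl)
    _ = permTutte G A x 0 * permTutte G A 0 x := by
        rw [permTutte_compl]

end Main

theorem permTutte_golden_ge_one_general
    {V : Type*} [Fintype V] [DecidableEq V] (G : SimpleGraph V) [DecidableRel G.Adj]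
    (A : Set V) (hbip : IsBipartition G A)
    (hdeg : ∀ v : V, 1 ≤ G.degree v) {x : ℝ} (hx : 5 / 2 ≤ x) :
    permTutte G A x 0 * permTutte G A 0 x ≥ 1 := by
  obtain ⟨L, hL, hcore⟩ := exists_isPendantSet_forall_notMem fun v =>
    (G.degree_pos_iff_exists_adj v).1 (hdeg v)
  calc (1 : ℝ) ≤ permTutte G A (5 / 2) 0 * permTutte G A 0 (5 / 2) :=
        one_le_permTutte_mul_permTutte_of_one_le_factor hbip hL (N := 32) (m := 24) (by norm_num)
          (by norm_num) (by norm_num) fun v hv =>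
            one_le_internalFactor_mul_externalFactor (hcore v hv)
    _ ≤ permTutte G A x 0 * permTutte G A 0 x := by
        rw [← permTutte_compl G A (5 / 2), ← permTutte_compl G A x]
        have hx₀ : (0 : ℝ) ≤ x := by linarith
        exact mul_le_mul (permTutte_le_permTutte G A (by norm_num) hx le_rfl)
          (permTutte_le_permTutte G Aᶜ (by norm_num) hx le_rfl)
          (permTutte_nonneg G Aᶜ (by norm_num) le_rfl) (permTutte_nonneg G A hx₀ le_rfl)

/-- For `x = (3+√5)/2`, every finite bipartite graph `H` with minimum degree at least `1`
satisfies `T̃_H(x,0) · T̃_H(0,x) ≥ 1`. -/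
theorem permTutte_golden_ge_one
    {V : Type*} [Fintype V] [DecidableEq V] (G : SimpleGraph V) [DecidableRel G.Adj]
    (A : Set V) (hbip : IsBipartition G A)
    (hdeg : ∀ v : V, 1 ≤ G.degree v) :
    permTutte G A ((3 + Real.sqrt 5) / 2) 0 * permTutte G A 0 ((3 + Real.sqrt 5) / 2) ≥ 1 := by
  have hsqrt : 2 ≤ Real.sqrt 5 := Real.le_sqrt_of_sq_le (by norm_num)
  exact permTutte_golden_ge_one_general G A hbip hdeg (by linarith)
end
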